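/- arXiv:1303.2453 — 3 statements merged into one kernel-verified Lean document; each statement's English description precedes it below -/
import Mathlib

section
/- Let s be a level-2 stack with TOP₁(s)=(σ,2,k), and let ρ ∈ Runs(s,s) be a run (of some level-2 collapsible pushdown system) that passes the stack Pop₁(s), i.e. some configuration of ρ has stack Pop₁(s). If k < |s|−1, then ρ passes the stack Pop₂(s). -/
namespace CPG

/-! ## Level-2 collapsible pushdown stacks -/

/-- Stack letters: `Sum.inl σ` is a letter with a level-1 link,
`Sum.inr (σ, k)` is a letter with a level-2 link to the substack of width `k`. -/
abbrev Letter (A : Type) := A ⊕ (A × ℕ)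

def symOf {A : Type} : Letter A → A
  | Sum.inl a => a
  | Sum.inr (a, _) => a

def lvlOf {A : Type} : Letter A → ℕ
  | Sum.inl _ => 1
  | Sum.inr _ => 2

abbrev Word (A : Type) := List (Letter A)

/-- A 2-word: a list of words; the last word is the topmost one. -/
abbrev Stack2 (A : Type) := List (Word A)

/-- The initial level-2 stack `⊥₂`. -/
def bottom2 {A : Type} (bot : A) : Stack2 A := [[Sum.inl bot]]

def top2 {A : Type} (s : Stack2 A) : Option (Word A) := s.getLast?

def top1 {A : Type} (s : Stack2 A) : Option (Letter A) := s.getLast?.bind List.getLast?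

def symS {A : Type} (s : Stack2 A) : Option A := (top1 s).map symOf

def lvlS {A : Type} (s : Stack2 A) : Option ℕ := (top1 s).map lvlOf

def lnkS {A : Type} (s : Stack2 A) : Option ℕ :=
  match top1 s, top2 s with
  | some (Sum.inr (_, j)), _ => some j
  | some (Sum.inl _), some w => some (w.length - 1)
  | _, _ => none

def clone2 {A : Type} (s : Stack2 A) : Option (Stack2 A) :=
  (top2 s).map fun w => s ++ [w]

def push1 {A : Type} [DecidableEq A] (bot a : A) (s : Stack2 A) : Option (Stack2 A) :=
  if a = bot then none else (top2 s).map fun w => s.dropLast ++ [w ++ [Sum.inl a]]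

def push2 {A : Type} [DecidableEq A] (bot a : A) (s : Stack2 A) : Option (Stack2 A) :=
  if a = bot then none else
    (top2 s).map fun w => s.dropLast ++ [w ++ [Sum.inr (a, s.length - 1)]]

def pop2 {A : Type} (s : Stack2 A) : Option (Stack2 A) :=
  if 1 < s.length then some s.dropLast else none

def pop1 {A : Type} (s : Stack2 A) : Option (Stack2 A) :=
  match s.getLast? with
  | some w => if 1 < w.length then some (s.dropLast ++ [w.dropLast]) else none
  | none => none

def collapse {A : Type} (s : Stack2 A) : Option (Stack2 A) :=
  match top1 s with
  | some (Sum.inr (_, k)) => if 0 < k then some (s.take k) else none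
  | some (Sum.inl _) => pop1 s
  | none => none

/-- The level-2 stack operations. -/
inductive Op (A : Type) where
  | clone2 | pop1 | pop2 | collapse
  | push1 (a : A) | push2 (a : A)

def applyOp {A : Type} [DecidableEq A] (bot : A) : Op A → Stack2 A → Option (Stack2 A)
  | .clone2 => clone2
  | .pop1 => pop1
  | .pop2 => pop2
  | .collapse => collapse
  | .push1 a => push1 bot a
  | .push2 a => push2 bot a

/-- `Stacks(Σ)` : the smallest set containing `⊥₂` and closed under the operations. -/
inductive IsStack {A : Type} [DecidableEq A] (bot : A) : Stack2 A → Prop where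
  | base : IsStack bot (bottom2 bot)
  | step {s t : Stack2 A} (op : Op A) : IsStack bot s → applyOp bot op s = some t →
      IsStack bot t

/-- Iterated application of a partial stack operation. -/
def iter {A : Type} (f : Stack2 A → Option (Stack2 A)) : ℕ → Stack2 A → Option (Stack2 A)
  | 0, s => some s
  | n + 1, s => (f s).bind (iter f n)

/-- `t` is a substack of `s`: `t = Pop₁ⁿ(Pop₂ᵐ(s))`. -/
def Substack {A : Type} (t s : Stack2 A) : Prop :=
  ∃ n m, (iter pop2 m s).bind (iter pop1 n) = some t

def ProperSubstack {A : Type} (t s : Stack2 A) : Prop := Substack t s ∧ t ≠ s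

/-- `s` is a prefix of `t` (`s ⊑ t`). -/
def StackPrefix {A : Type} (s t : Stack2 A) : Prop :=
  s ≠ [] ∧ s.length ≤ t.length ∧ s.dropLast <+: t ∧
    ∀ j, s.length - 1 ≤ j → j < t.length → s.getLastD [] <+: t.getD j []

/-- `t[s/u]` : the stack obtained from `t` by replacing the prefix `s` by `u`. -/
def substPrefix {A : Type} (t s u : Stack2 A) : Stack2 A :=
  u.dropLast ++
    (t.drop (s.length - 1)).map fun v => u.getLastD [] ++ v.drop (s.getLastD []).length

/-! ## Collapsible pushdown systems and runs -/

/-- A level-2 collapsible pushdown system. -/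
structure CPS (Q A Γ : Type) where
  bot : A
  q0 : Q
  Δ : Set (Q × A × Γ × Q × Op A)

variable {Q A Γ : Type} [DecidableEq A]

/-- A `γ`-labelled transition realized by the operation `op`. -/
def TransOp (S : CPS Q A Γ) (γ : Γ) (op : Op A) (c c' : Q × Stack2 A) : Prop :=
  ∃ σ : A, symS c.2 = some σ ∧ (c.1, σ, γ, c'.1, op) ∈ S.Δ ∧
    applyOp S.bot op c.2 = some c'.2

def Trans (S : CPS Q A Γ) (γ : Γ) (c c' : Q × Stack2 A) : Prop :=
  ∃ op, TransOp S γ op c c'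

/-- A run of a collapsible pushdown system (recording configurations, labels and
operations of each step). -/
structure Run (S : CPS Q A Γ) where
  len : ℕ
  cfg : ℕ → Q × Stack2 A
  lab : ℕ → Γ
  op : ℕ → Op A
  ok : ∀ i, i < len → TransOp S (lab i) (op i) (cfg i) (cfg (i + 1))

def Run.stk {S : CPS Q A Γ} (ρ : Run S) (i : ℕ) : Stack2 A := (ρ.cfg i).2

/-- The word of labels along a run. -/
def Run.labels {S : CPS Q A Γ} (ρ : Run S) : List Γ :=
  List.ofFn fun i : Fin ρ.len => ρ.lab i

/-- `Reach_L`-reachability: a run from `c` to `c'` labelled by a word in `L`. -/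
def ReachL (S : CPS Q A Γ) (L : Language Γ) (c c' : Q × Stack2 A) : Prop :=
  ∃ ρ : Run S, ρ.cfg 0 = c ∧ ρ.cfg ρ.len = c' ∧ ρ.labels ∈ L

/-- Plain reachability. -/
def Reach (S : CPS Q A Γ) (c c' : Q × Stack2 A) : Prop :=
  ∃ ρ : Run S, ρ.cfg 0 = c ∧ ρ.cfg ρ.len = c'

/-! ## ε-contraction -/

def oneLetterLang (γ : Γ) : Language Γ := {[γ]}

def nonEpsLang (eps : Γ) : Language Γ := {w | ∃ γ : Γ, γ ≠ eps ∧ w = [γ]}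

/-- The language `{ε}*`. -/
def epsStar (eps : Γ) : Language Γ := KStar.kstar (oneLetterLang eps)

/-- The language `({ε}*(Γ∖{ε}))*`. -/
def domLang (eps : Γ) : Language Γ :=
  KStar.kstar (epsStar eps * nonEpsLang eps)

/-- The language `{ε}*γ`. -/
def edgeLang (eps γ : Γ) : Language Γ := epsStar eps * oneLetterLang γ

/-- The vertex set of the ε-contraction `G/ε`. -/
def EpsDomain (S : CPS Q A Γ) (eps : Γ) : Set (Q × Stack2 A) :=
  {c | ReachL S (domLang eps) (S.q0, bottom2 S.bot) c}

/-! ## (Generalised) milestones and the order ≪ -/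

/-- `wordAt bot s i` is the word `wᵢ` of `s`, with the convention `w₀ = ⊥`. -/
def wordAt {A : Type} (bot : A) (s : Stack2 A) (i : ℕ) : Word A :=
  if i = 0 then [Sum.inl bot] else s.getD (i - 1) []

/-- Longest common prefix of two words. -/
def lcp {α : Type} [DecidableEq α] : List α → List α → List α
  | a :: s, b :: t => if a = b then a :: lcp s t else []
  | _, _ => []

/-- `m` is a generalised milestone of `s`. -/
def GenMilestone (bot : A) (s m : Stack2 A) : Prop :=
  ∃ i v, i < s.length ∧ m = s.take i ++ [v] ∧
    lcp (wordAt bot s i) (wordAt bot s (i + 1)) <+: v ∧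
    (v <+: wordAt bot s i ∨ v <+: wordAt bot s (i + 1))

/-- `m` is a milestone of `s`. -/
def Milestone (bot : A) (s m : Stack2 A) : Prop :=
  ∃ i v, i < s.length ∧ m = s.take i ++ [v] ∧
    lcp (wordAt bot s i) (wordAt bot s (i + 1)) <+: v ∧
    v <+: wordAt bot s (i + 1)

def genMilestones (bot : A) (s : Stack2 A) : Set (Stack2 A) := {m | GenMilestone bot s m}

def milestones (bot : A) (s : Stack2 A) : Set (Stack2 A) := {m | Milestone bot s m}

/-- The base cases of the partial order `≪`. -/
def llBase (bot : A) (s t : Stack2 A) : Prop :=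
  s.length < t.length ∨
    (s ≠ [] ∧ s.length = t.length ∧ s.dropLast = t.dropLast ∧
      ((t.getLastD [] <+: s.getLastD [] ∧ t.getLastD [] ≠ s.getLastD [] ∧
          s.getLastD [] <+: wordAt bot s (s.length - 1)) ∨
        (s.getLastD [] <+: t.getLastD [] ∧ s.getLastD [] ≠ t.getLastD [] ∧
          ¬ t.getLastD [] <+: wordAt bot s (s.length - 1))))

/-- The order `≪`: the smallest reflexive transitive relation containing `llBase`. -/
def ll (bot : A) : Stack2 A → Stack2 A → Prop := Relation.ReflTransGen (llBase bot)

/-- `m'` is the ≪-successor of `m` within `genMilestones bot s`. -/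
def LlSuccessor (bot : A) (s m m' : Stack2 A) : Prop :=
  GenMilestone bot s m ∧ GenMilestone bot s m' ∧ m ≠ m' ∧ ll bot m m' ∧
    ∀ m'', GenMilestone bot s m'' → ll bot m m'' → m'' ≠ m → ll bot m' m''

/-! ## Loops, returns and 1-loops -/

/-- The segment `[i,j]` of `ρ` is a loop (of its initial stack). -/
def LoopSeg {S : CPS Q A Γ} (ρ : Run S) (i j : ℕ) : Prop :=
  i ≤ j ∧ j ≤ ρ.len ∧ ρ.stk j = ρ.stk i ∧
    (∀ k, i ≤ k → k ≤ j → ∀ t, pop2 (ρ.stk i) = some t → ¬ Substack (ρ.stk k) t) ∧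
    (∀ k, i ≤ k → k ≤ j → ∀ m, 0 < m → ∀ t, iter pop1 m (ρ.stk i) = some t →
      ρ.stk k = t → ∀ m', m' < m → ∃ t', iter pop1 m' (ρ.stk i) = some t' ∧
        lvlS t' = some 1)

/-- A high loop: a loop that never visits `Pop₁` of its stack. -/
def HighLoopSeg {S : CPS Q A Γ} (ρ : Run S) (i j : ℕ) : Prop :=
  LoopSeg ρ i j ∧ ∀ k, i ≤ k → k ≤ j → ∀ t, pop1 (ρ.stk i) = some t → ρ.stk k ≠ t

/-- A low loop: a loop whose second and second-to-last stacks are `Pop₁` of its stack. -/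
def LowLoopSeg {S : CPS Q A Γ} (ρ : Run S) (i j : ℕ) : Prop :=
  LoopSeg ρ i j ∧ i < j ∧
    ∃ t, pop1 (ρ.stk i) = some t ∧ ρ.stk (i + 1) = t ∧ ρ.stk (j - 1) = t

/-- The common part of the definition of a return on the segment `[i,j]`:
it leads from its initial stack `t` to `Pop₂(t)` and never visits a substack
of `Pop₂(t)` before its final configuration. -/
def RetShell {S : CPS Q A Γ} (ρ : Run S) (i j : ℕ) : Prop :=
  i < j ∧ j ≤ ρ.len ∧ pop2 (ρ.stk i) = some (ρ.stk j) ∧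
    ∀ k, i ≤ k → k < j → ¬ Substack (ρ.stk k) (ρ.stk j)

/-- The segment `[i,j]` of `ρ` is a return (from its initial stack `t` to `Pop₂(t)`). -/
inductive RetSeg {S : CPS Q A Γ} (ρ : Run S) : ℕ → ℕ → Prop where
  | pop2 {i j : ℕ} (h : RetShell ρ i j) (hop : ρ.op (j - 1) = Op.pop2) : RetSeg ρ i j
  | collapse {i j : ℕ} (h : RetShell ρ i j) (hop : ρ.op (j - 1) = Op.collapse)
      (hpre : ∃ w w', top2 (ρ.stk i) = some w ∧ top2 (ρ.stk (j - 1)) = some w' ∧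
        w <+: w' ∧ w ≠ w') : RetSeg ρ i j
  | sub {i k j : ℕ} (h : RetShell ρ i j) (hik : i < k) (hkj : k ≤ j)
      (hpop : pop1 (ρ.stk i) = some (ρ.stk k)) (hret : RetSeg ρ k j) : RetSeg ρ i j

/-- The segment `[i,j]` of `ρ` is a level-1-loop. -/
def OneLoopSeg {S : CPS Q A Γ} (ρ : Run S) (i j : ℕ) : Prop :=
  i ≤ j ∧ j ≤ ρ.len ∧
    ∃ (s : Stack2 A) (w : Word A) (s' : Stack2 A),
      ρ.stk i = s ++ [w] ∧ ρ.stk j = s ++ s' ++ [w] ∧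
      (∀ k, i ≤ k → k ≤ j → s.length < (ρ.stk k).length) ∧
      (∀ k, i ≤ k → k ≤ j → 1 < w.length → top2 (ρ.stk k) = some w.dropLast →
        ∃ m, k < m ∧ m ≤ j ∧ RetSeg ρ k m)

/-! ## ExRet, ExLoop, ... -/

/-- `w↓₀` : replace every level-2 link by `0`. -/
def down0 {A : Type} : Word A → Word A :=
  List.map fun a => match a with
    | Sum.inl x => Sum.inl x
    | Sum.inr (x, _) => Sum.inr (x, 0)

def ExRet (S : CPS Q A Γ) (w : Word A) : Set (Q × Q) :=
  {p | ∃ ρ : Run S, ρ.cfg 0 = (p.1, [down0 w, down0 w]) ∧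
    ρ.cfg ρ.len = (p.2, [down0 w]) ∧ RetSeg ρ 0 ρ.len}

def ExLoop (S : CPS Q A Γ) (w : Word A) : Set (Q × Q) :=
  {p | ∃ ρ : Run S, ρ.cfg 0 = (p.1, [down0 w]) ∧ ρ.cfg ρ.len = (p.2, [down0 w]) ∧
    LoopSeg ρ 0 ρ.len}

def ExHLoop (S : CPS Q A Γ) (w : Word A) : Set (Q × Q) :=
  {p | ∃ ρ : Run S, ρ.cfg 0 = (p.1, [down0 w]) ∧ ρ.cfg ρ.len = (p.2, [down0 w]) ∧
    HighLoopSeg ρ 0 ρ.len}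

def ExLLoop (S : CPS Q A Γ) (w : Word A) : Set (Q × Q) :=
  {p | ∃ ρ : Run S, ρ.cfg 0 = (p.1, [down0 w]) ∧ ρ.cfg ρ.len = (p.2, [down0 w]) ∧
    LowLoopSeg ρ 0 ρ.len}

def ExOneLoop (S : CPS Q A Γ) (w : Word A) : Set (Q × Q) :=
  {p | ∃ (ρ : Run S) (s' : Stack2 A), ρ.cfg 0 = (p.1, [down0 w]) ∧
    ρ.cfg ρ.len = (p.2, s' ++ [down0 w]) ∧ OneLoopSeg ρ 0 ρ.len}

/-! ## Finite binary trees -/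

/-- Finite binary trees with labels in `α` and optional left/right children. -/
inductive PTree (α : Type) where
  | node (a : α) (l r : Option (PTree α)) : PTree α

/-- The label of the node at address `d` (`false` = left/0, `true` = right/1). -/
def PTree.labelAt {α : Type} : PTree α → List Bool → Option α
  | .node a _ _, [] => some a
  | .node _ (some t) _, false :: d => t.labelAt d
  | .node _ none _, false :: _ => none
  | .node _ _ (some t), true :: d => t.labelAt d
  | .node _ _ none, true :: _ => none

def PTree.map {α β : Type} (f : α → β) : PTree α → PTree β
  | .node a l r =>
    .node (f a)
      (match l with | none => none | some t => some (t.map f))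
      (match r with | none => none | some t => some (t.map f))

/-- Convolution of two trees, with `none` as padding symbol `□`. -/
def PTree.conv {α β : Type} : PTree α → PTree β → PTree (Option α × Option β)
  | .node a l r, .node b l' r' =>
    .node (some a, some b)
      (match l, l' with
        | none, none => none
        | some t, none => some (t.map fun x => (some x, none))
        | none, some u => some (u.map fun x => (none, some x))
        | some t, some u => some (PTree.conv t u))
      (match r, r' with
        | none, none => none
        | some t, none => some (t.map fun x => (some x, none))
        | none, some u => some (u.map fun x => (none, some x))
        | some t, some u => some (PTree.conv t u))

/-- A (bottom-up nondeterministic) finite tree automaton. -/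
structure TreeAut (α : Type) where
  St : Type
  fin : Finite St
  qI : St
  F : Set St
  Δ : Set (St × α × St × St)

/-- Acceptance of a finite tree by a tree automaton. -/
def TreeAut.Accepts {α : Type} (M : TreeAut α) (t : PTree α) : Prop :=
  ∃ ρ : List Bool → M.St,
    (∀ d, t.labelAt d = none → ρ d = M.qI) ∧
    (∀ d a, t.labelAt d = some a → (ρ d, a, ρ (d ++ [false]), ρ (d ++ [true])) ∈ M.Δ) ∧
    ρ [] ∈ M.F

/-- A family of binary relations on `B` is tree-automatic. -/
def IsTreeAutomatic {B : Type} {I : Type} (E : I → B → B → Prop) : Prop :=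
  ∃ (α : Type) (_ : Finite α) (AB : TreeAut α) (AE : I → TreeAut (Option α × Option α))
    (f : {t : PTree α // AB.Accepts t} → B),
    Function.Bijective f ∧
      ∀ (i : I) (t₁ t₂ : {t : PTree α // AB.Accepts t}),
        (AE i).Accepts (PTree.conv t₁.1 t₂.1) ↔ E i (f t₁) (f t₂)

/-! ## The encoding of configurations as trees -/

/-- Labels of encoding trees: a state, a pair (symbol, link level), or `ε`. -/
abbrev EncLabel (Q A : Type) := Q ⊕ ((A × ℕ) ⊕ Unit)

def epsLab {Q A : Type} : EncLabel Q A := Sum.inr (Sum.inr ())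

def symLab {Q A : Type} (τ : Letter A) : EncLabel Q A := Sum.inr (Sum.inl (symOf τ, lvlOf τ))

/-- Encoding of blocklines as trees (with a fuel parameter driving the recursion;
the fuel used in `encStack` is large enough so that it never runs out on actual
blocklines). The left subtree encodes the blockline induced by the first maximal
block, the right subtree the remaining blocks. -/
def encBL (Q : Type) {A : Type} [DecidableEq A] :
    ℕ → EncLabel Q A → List (Word A) → PTree (EncLabel Q A)
  | 0, σ, _ => .node σ none none
  | _ + 1, σ, [] => .node σ none none
  | fuel + 1, σ, w :: rest =>
    if w.length ≤ 1 then
      match rest with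
      | [] => .node σ none none
      | _ :: _ => .node σ none (some (encBL Q fuel epsLab rest))
    else
      let p : Word A → Bool := fun v => decide (v.take 2 = w.take 2)
      let blk := (w :: rest).takeWhile p
      let restBlk := (w :: rest).dropWhile p
      .node σ
        (some (encBL Q fuel
          (match w[1]? with | some τ' => symLab τ' | none => epsLab)
          (blk.map List.tail)))
        (match restBlk with
          | [] => none
          | _ :: _ => some (encBL Q fuel epsLab restBlk))

/-- The total number of letters of a 2-word. -/
def size2 {A : Type} (s : Stack2 A) : ℕ := (s.map List.length).sum

/-- The encoding `Enc(s) = Enc(s, (⊥,1))` of a stack. -/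
def encStack (Q : Type) {A : Type} [DecidableEq A] (bot : A) (s : Stack2 A) :
    PTree (EncLabel Q A) :=
  encBL Q (size2 s + 1) (Sum.inr (Sum.inl (bot, 1))) s

/-- The encoding of a configuration: the state at the root, `Enc(s)` as left subtree. -/
def Enc {Q A : Type} [DecidableEq A] (bot : A) (c : Q × Stack2 A) : PTree (EncLabel Q A) :=
  .node (Sum.inl c.1) (some (encStack Q bot c.2)) none

/-- The class `EncTrees` of encoding trees. -/
def EncTrees (Q A : Type) (bot : A) : Set (PTree (EncLabel Q A)) :=
  {T | (∃ q : Q, T.labelAt [] = some (Sum.inl q)) ∧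
    T.labelAt [true] = none ∧ T.labelAt [false] ≠ none ∧
    T.labelAt [false] = some (Sum.inr (Sum.inl (bot, 1))) ∧
    (∀ (d : List Bool) (x : EncLabel Q A),
      T.labelAt (false :: (d ++ [false])) = some x →
        ∃ (σ : A) (l : ℕ), σ ≠ bot ∧ (l = 1 ∨ l = 2) ∧ x = Sum.inr (Sum.inl (σ, l))) ∧
    (∀ (d : List Bool) (x : EncLabel Q A), T.labelAt (d ++ [true]) = some x → x = epsLab) ∧
    (∀ (d : List Bool) (σ : A), ¬ (T.labelAt (d ++ [false]) = some (Sum.inr (Sum.inl (σ, 1))) ∧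
      T.labelAt (d ++ [true, false]) = some (Sum.inr (Sum.inl (σ, 1)))))}

/-- Restriction of a tree to the nodes lexicographically ≤ `d`. -/
def restrictLex {α : Type} : PTree α → List Bool → PTree α
  | .node a _ _, [] => .node a none none
  | .node a l _, false :: d =>
      .node a (match l with | none => none | some t => some (restrictLex t d)) none
  | .node a l r, true :: d =>
      .node a l (match r with | none => none | some t => some (restrictLex t d))

/-- The lexicographic order on tree addresses. -/
def lexLe (d e : List Bool) : Prop :=
  d <+: e ∨ ∃ (c x y : List Bool), d = c ++ false :: x ∧ e = c ++ true :: y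

/-! ## Deterministic finite automata with output (Moore machines) -/

structure Moore (α ω : Type) where
  St : Type
  fin : Finite St
  init : St
  step : St → α → St
  out : St → ω

def Moore.output {α ω : Type} (M : Moore α ω) (w : List α) : ω :=
  M.out (w.foldl M.step M.init)

theorem op_cases {A : Type} [DecidableEq A] (bot : A) (op : Op A) (t t' : Stack2 A)
    (h : applyOp bot op t = some t') :
    ∃ r x, t = r ++ [x] ∧ (t' = r ++ [x] ++ [x] ∨ (∃ a, t' = r ++ [x ++ [Sum.inl a]]) ∨
      (∃ a, t' = r ++ [x ++ [Sum.inr (a, r.length)]]) ∨ t' = r ++ [x.dropLast] ∨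
      ∃ m, t' = t.take m) := by
  rcases List.eq_nil_or_concat t with rfl | ⟨r, x, rfl⟩
  · cases op <;> simp [applyOp, clone2, pop1, pop2, collapse, push1, push2, top1, top2] at h
  · simp only [List.concat_eq_append] at *
    have hpop1 : pop1 (r ++ [x]) = some t' → t' = r ++ [x.dropLast] := by
      intro h
      simp [pop1] at h
      exact h.2.symm
    refine ⟨r, x, rfl, ?_⟩
    cases op with
    | clone2 =>
      simp [applyOp, clone2, top2] at h
      left; simp [← h]
    | pop1 => exact Or.inr (Or.inr (Or.inr (Or.inl (hpop1 h))))
    | pop2 =>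
      simp only [applyOp, pop2] at h
      split_ifs at h
      right; right; right; right
      refine ⟨(r ++ [x]).length - 1, ?_⟩
      rw [← List.dropLast_eq_take]
      exact (Option.some.inj h).symm
    | collapse =>
      simp only [applyOp, collapse] at h
      split at h
      · split_ifs at h
        right; right; right; right
        exact ⟨_, (Option.some.inj h).symm⟩
      · exact Or.inr (Or.inr (Or.inr (Or.inl (hpop1 h))))
      · cases h
    | push1 a =>
      simp [applyOp, push1, top2] at h
      right; left; exact ⟨a, h.2.symm⟩
    | push2 a =>
      simp [applyOp, push2, top2] at h
      right; right; left; exact ⟨a, h.2.symm⟩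

theorem op_back {A : Type} [DecidableEq A] (bot : A) (op : Op A) (t t' : Stack2 A)
    (h : applyOp bot op t = some t') (u : Stack2 A) (hl : u.length < t'.length)
    (hu : u <+: t') : t = u ∨ (u.length < t.length ∧ u <+: t) := by
  have key : ∀ (r : Stack2 A) (x y : Word A), u <+: r ++ [y] →
      u.length < (r ++ [y]).length → u.length < (r ++ [x]).length ∧ u <+: r ++ [x] := by
    intro r x y h1 h2
    have h3 : u.length ≤ r.length := by simp at h2; omega
    have h4 : u <+: r := List.prefix_of_prefix_length_le h1 (List.prefix_append _ _) h3
    exact ⟨by simp; omega, h4.trans (List.prefix_append _ _)⟩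
  obtain ⟨r, x, rfl, rfl | ⟨a, rfl⟩ | ⟨a, rfl⟩ | rfl | ⟨m, rfl⟩⟩ := op_cases bot op t t' h
  · have h3 : u.length ≤ (r ++ [x]).length := by simp at hl ⊢; omega
    have h4 : u <+: r ++ [x] := List.prefix_of_prefix_length_le hu (List.prefix_append _ _) h3
    rcases h3.eq_or_lt with h5 | h5
    · exact Or.inl (h4.eq_of_length h5).symm
    · exact Or.inr ⟨h5, h4⟩
  · exact Or.inr (key _ _ _ hu hl)
  · exact Or.inr (key _ _ _ hu hl)
  · exact Or.inr (key _ _ _ hu hl)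
  · refine Or.inr ⟨hl.trans_le ?_, hu.trans (List.take_prefix _ _)⟩
    exact List.length_take_le' _ _

theorem op_forward {A : Type} [DecidableEq A] (bot : A) (op : Op A) (t t' : Stack2 A)
    (h : applyOp bot op t = some t') (N p k : ℕ) (σ : A) (hk : k < N) (hl : N < t.length)
    (hI : ∀ j v, N ≤ j → t[j]? = some v → v[p]? ≠ some (Sum.inr (σ, k))) :
    ∀ j v, N ≤ j → t'[j]? = some v → v[p]? ≠ some (Sum.inr (σ, k)) := by
  intro j v hj hv
  obtain ⟨r, x, rfl, hc⟩ := op_cases bot op t t' h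
  have hN : N ≤ r.length := by simp at hl; omega
  have hx : x[p]? ≠ some (Sum.inr (σ, k)) := hI r.length x hN (by simp)
  have hr : ∀ v, r[j]? = some v → v[p]? ≠ some (Sum.inr (σ, k)) := by
    intro v hv
    apply hI j v hj
    have := (List.getElem?_eq_some_iff.1 hv).1
    rw [List.getElem?_append_left this]
    exact hv
  rcases hc with rfl | ⟨a, rfl⟩ | ⟨a, rfl⟩ | rfl | ⟨m, rfl⟩
  · rw [List.getElem?_append] at hv
    split_ifs at hv
    · exact hI j v hj hv
    · rw [List.getElem?_singleton] at hv
      split_ifs at hv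
      cases hv; exact hx
  · rw [List.getElem?_append] at hv
    split_ifs at hv
    · exact hr v hv
    · rw [List.getElem?_singleton] at hv
      split_ifs at hv
      cases hv
      rw [List.getElem?_append]
      split_ifs
      · exact hx
      · rw [List.getElem?_singleton]; split_ifs <;> simp
  · rw [List.getElem?_append] at hv
    split_ifs at hv
    · exact hr v hv
    · rw [List.getElem?_singleton] at hv
      split_ifs at hv
      cases hv
      rw [List.getElem?_append]
      split_ifs
      · exact hx
      · rw [List.getElem?_singleton]
        split_ifs
        · simp; omega
        · simp
  · rw [List.getElem?_append] at hv
    split_ifs at hv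
    · exact hr v hv
    · rw [List.getElem?_singleton] at hv
      split_ifs at hv
      cases hv
      rw [List.getElem?_dropLast]
      split_ifs
      · exact hx
      · simp
  · rw [List.getElem?_take] at hv
    split_ifs at hv
    exact hI j v hj hv

/-- If `TOP₁(s) = (σ,2,k)` with `k < |s| − 1` and `ρ ∈ Runs(s,s)`
passes `Pop₁(s)`, then `ρ` passes `Pop₂(s)`. -/
theorem run_passing_pop1_passes_pop2
    {Q A Γ : Type} [DecidableEq A] (S : CPS Q A Γ)
    (s : Stack2 A) (hs : IsStack S.bot s)
    (σ : A) (k : ℕ) (htop : top1 s = some (Sum.inr (σ, k)))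
    (ρ : Run S) (h0 : ρ.stk 0 = s) (hlast : ρ.stk ρ.len = s)
    (t₁ : Stack2 A) (hp : pop1 s = some t₁)
    (hvisit : ∃ i, i ≤ ρ.len ∧ ρ.stk i = t₁)
    (hk : k < s.length - 1) :
    ∃ t₂, pop2 s = some t₂ ∧ ∃ i, i ≤ ρ.len ∧ ρ.stk i = t₂ := by
  rcases List.eq_nil_or_concat s with rfl | ⟨u, x, rfl⟩
  · simp [top1] at htop
  simp only [List.concat_eq_append] at *
  have hku : k < u.length := by simpa using hk
  refine ⟨u, ?_, ?_⟩
  · simp [pop2]; intro h; simp [h] at hku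
  by_contra hno
  push Not at hno
  -- going backwards from the end, the run never leaves the stacks above `u`
  have hback : ∀ d, d ≤ ρ.len →
      u.length < (ρ.stk (ρ.len - d)).length ∧ u <+: ρ.stk (ρ.len - d) := by
    intro d
    induction d with
    | zero => intro _; simp [hlast]
    | succ d ih =>
      intro hd
      obtain ⟨h1, h2⟩ := ih (by omega)
      have hok := ρ.ok (ρ.len - (d + 1)) (by omega)
      rw [show ρ.len - (d + 1) + 1 = ρ.len - d by omega] at hok
      obtain ⟨_, _, _, hop⟩ := hok
      rcases op_back _ _ _ _ hop u h1 h2 with h | h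
      · exact absurd h (hno _ (by omega))
      · exact h
  have hx : x.getLast? = some (Sum.inr (σ, k)) := by simpa [top1] using htop
  have hxe : x[x.length - 1]? = some (Sum.inr (σ, k)) := by
    rw [← List.getLast?_eq_getElem?]; exact hx
  obtain ⟨i, hi, hit⟩ := hvisit
  have ht1 : u ++ [x.dropLast] = t₁ := by
    simp [pop1] at hp
    exact hp.2
  have hfor : ∀ d, i + d ≤ ρ.len → ∀ j v, u.length ≤ j → (ρ.stk (i + d))[j]? = some v →
      v[x.length - 1]? ≠ some (Sum.inr (σ, k)) := by
    intro d
    induction d with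
    | zero =>
      intro _ j v hj hv
      rw [Nat.add_zero, hit, ← ht1, List.getElem?_append_right hj,
        List.getElem?_singleton] at hv
      split_ifs at hv
      cases hv
      rw [List.getElem?_dropLast]
      simp
    | succ d ih =>
      intro hd
      obtain ⟨_, _, _, hop⟩ := ρ.ok (i + d) (by omega)
      have hb := (hback (ρ.len - (i + d)) (by omega)).1
      rw [show ρ.len - (ρ.len - (i + d)) = i + d by omega] at hb
      exact op_forward _ _ _ _ hop _ _ _ _ hku hb (ih (by omega))
  refine hfor (ρ.len - i) (by omega) u.length x le_rfl ?_ hxe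
  rw [show i + (ρ.len - i) = ρ.len by omega, hlast]
  simp

end CPG
end

section
/- Let ρ be a run of a level-2 collapsible pushdown system ending in stack s, let m ∈ genMilestones(s)∖{s} be such that ρ visits m, and let i be maximal such that the stack of ρ(i) is m. Then ρ also visits the ≪-minimal generalised milestone m' ∈ genMilestones(s)∖genMilestones(m), and for i' maximal such that the stack of ρ(i') is m', the subrun ρ↾[i+1,i'] is a loop of m'. -/
namespace CPG

variable {Q A Γ : Type} [DecidableEq A]

/-! ## Auxiliary lemmas -/

theorem lcp_left {α : Type} [DecidableEq α] (a b : List α) : lcp a b <+: a := by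
  induction a generalizing b with
  | nil => simp [lcp]
  | cons x a ih =>
    cases b with
    | nil => simp [lcp]
    | cons y b =>
      simp only [lcp]
      split
      · exact (List.prefix_cons_inj x).2 (ih b)
      · exact List.nil_prefix

theorem lcp_right {α : Type} [DecidableEq α] (a b : List α) : lcp a b <+: b := by
  induction a generalizing b with
  | nil => simp [lcp]
  | cons x a ih =>
    cases b with
    | nil => simp [lcp]
    | cons y b =>
      simp only [lcp]
      split
      · rename_i h
        subst h
        exact (List.prefix_cons_inj x).2 (ih b)
      · exact List.nil_prefix

theorem prefix_lcp {α : Type} [DecidableEq α] {u a b : List α} (ha : u <+: a) (hb : u <+: b) :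
    u <+: lcp a b := by
  induction u generalizing a b with
  | nil => exact List.nil_prefix
  | cons x u ih =>
    cases a with
    | nil => simp at ha
    | cons y a =>
      cases b with
      | nil => simp at hb
      | cons z b =>
        rw [List.cons_prefix_cons] at ha hb
        obtain ⟨rfl, ha⟩ := ha
        obtain ⟨rfl, hb⟩ := hb
        simp only [lcp, if_true]
        exact (List.prefix_cons_inj x).2 (ih ha hb)

theorem lcp_of_prefix {α : Type} [DecidableEq α] {v a : List α} (h : v <+: a) :
    lcp a v = v :=
  (lcp_right a v).eq_of_length_le (prefix_lcp h (List.prefix_refl v)).length_le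

theorem not_snoc_prefix {α : Type} {v : List α} {x : α} : ¬ (v ++ [x]) <+: v := by
  intro h
  have := h.length_le
  simp at this

theorem prefix_snoc {α : Type} {u v : List α} {x : α} (h : u <+: v ++ [x]) :
    u = v ++ [x] ∨ u <+: v := by
  rwa [List.prefix_concat_iff] at h

/-- The topmost word of `r`, or `⊥` if `r` is empty. -/
def lastW (bot : A) (r : Stack2 A) : Word A := r.getLastD [Sum.inl bot]

theorem wordAt_length (bot : A) (r : Stack2 A) : wordAt bot r r.length = lastW bot r := by
  rcases List.eq_nil_or_concat r with rfl | ⟨r, w, rfl⟩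
  · simp [wordAt, lastW]
  · simp [wordAt, lastW]

theorem wordAt_append (bot : A) (r t : Stack2 A) (i : ℕ) (hi : i ≤ r.length) :
    wordAt bot (r ++ t) i = wordAt bot r i := by
  unfold wordAt
  split
  · rfl
  · rw [List.getD_append]
    omega

theorem gm_concat (bot : A) (r : Stack2 A) (w : Word A) (m : Stack2 A) :
    GenMilestone bot (r ++ [w]) m ↔ GenMilestone bot r m ∨
      ∃ v, m = r ++ [v] ∧ lcp (lastW bot r) w <+: v ∧ (v <+: lastW bot r ∨ v <+: w) := by
  have hw : wordAt bot (r ++ [w]) (r.length + 1) = w := by simp [wordAt]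
  constructor
  · rintro ⟨i, v, hi, rfl, h1, h2⟩
    simp only [List.length_append, List.length_singleton] at hi
    rcases Nat.lt_or_ge i r.length with h | h
    · left
      refine ⟨i, v, h, ?_, ?_, ?_⟩
      · rw [List.take_append_of_le_length h.le]
      · rwa [wordAt_append _ _ _ _ h.le, wordAt_append _ _ _ _ h] at h1
      · rwa [wordAt_append _ _ _ _ h.le, wordAt_append _ _ _ _ h] at h2
    · right
      obtain rfl : i = r.length := by omega
      rw [wordAt_append _ _ _ _ le_rfl, hw, wordAt_length] at h1 h2
      exact ⟨v, by simp, h1, h2⟩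
  · rintro (⟨i, v, h, rfl, h1, h2⟩ | ⟨v, rfl, h1, h2⟩)
    · refine ⟨i, v, by simp; omega, ?_, ?_, ?_⟩
      · rw [List.take_append_of_le_length h.le]
      · rwa [wordAt_append _ _ _ _ h.le, wordAt_append _ _ _ _ h]
      · rwa [wordAt_append _ _ _ _ h.le, wordAt_append _ _ _ _ h]
    · refine ⟨r.length, v, by simp, by simp, ?_, ?_⟩
      · rwa [wordAt_append _ _ _ _ le_rfl, hw, wordAt_length]
      · rwa [wordAt_append _ _ _ _ le_rfl, hw, wordAt_length]

theorem gm_nil (bot : A) (m : Stack2 A) : ¬ GenMilestone bot [] m := by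
  rintro ⟨i, v, hi, -⟩
  simp at hi

theorem gm_length (bot : A) {s m : Stack2 A} (h : GenMilestone bot s m) :
    m.length ≤ s.length := by
  obtain ⟨i, v, hi, rfl, -⟩ := h
  simp
  omega

theorem gm_refl (bot : A) {t : Stack2 A} (h : t ≠ []) : GenMilestone bot t t := by
  rcases List.eq_nil_or_concat t with rfl | ⟨r, w, rfl⟩
  · exact absurd rfl h
  · rw [List.concat_eq_append, gm_concat]
    exact Or.inr ⟨w, rfl, lcp_right _ _, Or.inr (List.prefix_refl w)⟩

theorem gm_trans (bot : A) {s m n : Stack2 A} (h : GenMilestone bot s m)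
    (h' : GenMilestone bot m n) : GenMilestone bot s n := by
  induction s using List.reverseRecOn with
  | nil => exact absurd h (gm_nil bot m)
  | append_singleton r w ih =>
    rw [gm_concat] at h ⊢
    rcases h with h | ⟨v, rfl, h1, h2⟩
    · exact Or.inl (ih h)
    · rw [gm_concat] at h'
      rcases h' with h' | ⟨u, rfl, h3, h4⟩
      · exact Or.inl h'
      · right
        refine ⟨u, rfl, ?_, ?_⟩
        · exact (prefix_lcp (lcp_left _ _) h1).trans h3
        · rcases h4 with h4 | h4
          · exact Or.inl h4
          · exact h2.imp h4.trans h4.trans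

/-- Parent–child relation in the tree of stacks. -/
inductive Next (bot : A) : Stack2 A → Stack2 A → Prop where
  | down (r : Stack2 A) (v : Word A) (x : Letter A) (h : v ++ [x] <+: lastW bot r) :
      Next bot (r ++ [v ++ [x]]) (r ++ [v])
  | up (r : Stack2 A) (v : Word A) (x : Letter A) (h : ¬ v ++ [x] <+: lastW bot r) :
      Next bot (r ++ [v]) (r ++ [v ++ [x]])
  | clone (r : Stack2 A) (h : r ≠ []) : Next bot r (r ++ [lastW bot r])

theorem next_unique (bot : A) {t m n : Stack2 A} (h : Next bot t n) (h' : Next bot m n) :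
    t = m := by
  cases h with
  | down r v x h =>
    generalize hn : r ++ [v] = n at h'
    cases h' with
    | down r' v' x' h'' =>
      obtain ⟨rfl, hv⟩ := List.append_inj' hn rfl
      simp only [List.cons.injEq, and_true] at hv
      subst hv
      have := (List.prefix_of_prefix_length_le h h'' (by simp)).eq_of_length (by simp)
      rw [this]
    | up r' v' x' h'' =>
      obtain ⟨rfl, hv⟩ := List.append_inj' hn rfl
      simp only [List.cons.injEq, and_true] at hv
      subst hv
      exact absurd ((List.prefix_append _ _).trans h) h''
    | clone r' h'' =>
      obtain ⟨rfl, hv⟩ := List.append_inj' hn rfl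
      simp only [List.cons.injEq, and_true] at hv
      rw [← hv] at h
      exact absurd h not_snoc_prefix
  | up r v x h =>
    generalize hn : r ++ [v ++ [x]] = n at h'
    cases h' with
    | down r' v' x' h'' =>
      obtain ⟨rfl, hv⟩ := List.append_inj' hn rfl
      simp only [List.cons.injEq, and_true] at hv
      subst hv
      exact absurd ((List.prefix_append _ _).trans h'') h
    | up r' v' x' h'' =>
      obtain ⟨rfl, hv⟩ := List.append_inj' hn rfl
      simp only [List.cons.injEq, and_true] at hv
      obtain ⟨rfl, -⟩ := List.append_inj' hv rfl
      rfl
    | clone r' h'' =>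
      obtain ⟨rfl, hv⟩ := List.append_inj' hn rfl
      simp only [List.cons.injEq, and_true] at hv
      rw [hv] at h
      exact absurd (List.prefix_refl _) h
  | clone _ h =>
    generalize hn : t ++ [lastW bot t] = n at h'
    cases h' with
    | down r' v' x' h'' =>
      obtain ⟨rfl, hv⟩ := List.append_inj' hn rfl
      simp only [List.cons.injEq, and_true] at hv
      rw [← hv] at h''
      exact absurd h'' not_snoc_prefix
    | up r' v' x' h'' =>
      obtain ⟨rfl, hv⟩ := List.append_inj' hn rfl
      simp only [List.cons.injEq, and_true] at hv
      rw [hv] at h''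
      exact absurd (List.prefix_refl _) h''
    | clone r' h'' => exact (List.append_inj' hn rfl).1

theorem next_gm (bot : A) {t n : Stack2 A} (h : Next bot t n) : GenMilestone bot n t := by
  cases h with
  | down r v x h =>
    rw [gm_concat]
    exact Or.inr ⟨_, rfl, (lcp_right _ _).trans (List.prefix_append _ _), Or.inl h⟩
  | up r v x h =>
    rw [gm_concat]
    refine Or.inr ⟨_, rfl, ?_, Or.inr (List.prefix_append _ _)⟩
    rcases prefix_snoc (lcp_right (lastW bot r) (v ++ [x])) with h' | h'
    · exact absurd (h' ▸ lcp_left _ _) h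
    · exact h'
  | clone _ h =>
    rw [gm_concat]
    exact Or.inl (gm_refl bot h)

theorem next_not_gm (bot : A) {t n : Stack2 A} (h : Next bot t n) : ¬ GenMilestone bot t n := by
  intro hg
  cases h with
  | down r v x h =>
    rw [gm_concat] at hg
    rcases hg with hg | ⟨u, hu, h1, -⟩
    · have := gm_length bot hg
      simp at this
    · simp only [List.append_cancel_left_eq, List.cons.injEq, and_true] at hu
      subst hu
      rw [lcp_of_prefix h] at h1
      exact not_snoc_prefix h1
  | up r v x h =>
    rw [gm_concat] at hg
    rcases hg with hg | ⟨u, hu, -, h1⟩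
    · have := gm_length bot hg
      simp at this
    · simp only [List.append_cancel_left_eq, List.cons.injEq, and_true] at hu
      subst hu
      exact h1.elim h not_snoc_prefix
  | clone _ h =>
    have := gm_length bot hg
    simp at this

theorem next_llBase (bot : A) {t n : Stack2 A} (h : Next bot t n) : llBase bot t n := by
  cases h with
  | down r v x h =>
    right
    refine ⟨by simp, by simp, by simp, Or.inl ?_⟩
    rw [wordAt_append _ _ _ _ (by simp)]
    simp [wordAt_length, h]
  | up r v x h =>
    right
    refine ⟨by simp, by simp, by simp, Or.inr ?_⟩
    rw [wordAt_append _ _ _ _ (by simp)]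
    simp [wordAt_length, h]
  | clone _ h => left; simp

theorem nexts_ll (bot : A) {t n : Stack2 A} (h : Relation.ReflTransGen (Next bot) t n) :
    ll bot t n :=
  Relation.ReflTransGen.mono (fun _ _ => next_llBase bot) _ _ h

theorem nexts_gm (bot : A) {t n : Stack2 A} (hn : n ≠ [])
    (h : Relation.ReflTransGen (Next bot) t n) : GenMilestone bot n t := by
  induction h using Relation.ReflTransGen.head_induction_on with
  | refl => exact gm_refl bot hn
  | head h _ ih => exact gm_trans bot ih (next_gm bot h)

theorem nexts_down (bot : A) (r : Stack2 A) {u v : Word A} (huv : u <+: v)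
    (hv : v <+: lastW bot r) : Relation.ReflTransGen (Next bot) (r ++ [v]) (r ++ [u]) := by
  obtain ⟨z, rfl⟩ := huv
  induction z using List.reverseRecOn with
  | nil => simpa using Relation.ReflTransGen.refl
  | append_singleton z x ih =>
    rw [← List.append_assoc] at hv ⊢
    exact (ih ((List.prefix_append _ _).trans hv)).head (Next.down r (u ++ z) x hv)

theorem nexts_up (bot : A) (r : Stack2 A) {u v w : Word A} (huv : u <+: v)
    (hv : v <+: w) (hu : lcp (lastW bot r) w <+: u) :
    Relation.ReflTransGen (Next bot) (r ++ [u]) (r ++ [v]) := by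
  obtain ⟨z, rfl⟩ := huv
  induction z using List.reverseRecOn with
  | nil => simpa using Relation.ReflTransGen.refl
  | append_singleton z x ih =>
    rw [← List.append_assoc] at hv ⊢
    refine (ih ((List.prefix_append _ _).trans hv)).tail (Next.up r (u ++ z) x ?_)
    intro h
    have := ((prefix_lcp h hv).trans hu).length_le
    simp at this

theorem gm_nexts (bot : A) {s m : Stack2 A} (h : GenMilestone bot s m) :
    Relation.ReflTransGen (Next bot) m s := by
  induction s using List.reverseRecOn with
  | nil => exact absurd h (gm_nil bot m)
  | append_singleton r w ih =>
    rw [gm_concat] at h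
    have hup : ∀ u, lcp (lastW bot r) w <+: u → u <+: w →
        Relation.ReflTransGen (Next bot) (r ++ [u]) (r ++ [w]) :=
      fun u h1 h2 => nexts_up bot r h2 (List.prefix_refl w) h1
    have hdown : ∀ u, lcp (lastW bot r) w <+: u → u <+: lastW bot r →
        Relation.ReflTransGen (Next bot) (r ++ [u]) (r ++ [w]) :=
      fun u h1 h2 => (nexts_down bot r h1 h2).trans
        (hup _ (List.prefix_refl _) (lcp_right _ _))
    rcases h with h | ⟨v, rfl, h1, h2⟩
    · have hr : r ≠ [] := by
        rintro rfl
        exact gm_nil bot m h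
      exact ((ih h).tail (Next.clone r hr)).trans (hdown _ (lcp_left _ _) (List.prefix_refl _))
    · exact h2.elim (hdown v h1) (hup v h1)

theorem gm_take (bot : A) (t : Stack2 A) (ht : t ≠ []) (k : ℕ) (hk : 0 < k) :
    GenMilestone bot t (t.take k) := by
  induction t using List.reverseRecOn with
  | nil => exact absurd rfl ht
  | append_singleton r w ih =>
    rcases Nat.lt_or_ge r.length k with h | h
    · rw [List.take_of_length_le (by simp; omega)]
      exact gm_refl bot ht
    · rw [List.take_append_of_le_length h, gm_concat]
      left
      apply ih
      rintro rfl
      simp at h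
      omega

/-- Normal forms of the stack operations. -/
inductive StepN (bot : A) : Stack2 A → Stack2 A → Prop where
  | clone (r : Stack2 A) (w : Word A) : StepN bot (r ++ [w]) (r ++ [w] ++ [w])
  | take (t : Stack2 A) (k : ℕ) (ht : t ≠ []) (hk : 0 < k) : StepN bot t (t.take k)
  | pop (r : Stack2 A) (v : Word A) (x : Letter A) : StepN bot (r ++ [v ++ [x]]) (r ++ [v])
  | push (r : Stack2 A) (v : Word A) (x : Letter A)
      (hx : ∀ a l, x = Sum.inr (a, l) → l = r.length) : StepN bot (r ++ [v]) (r ++ [v ++ [x]])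

theorem pop1_eq {s t : Stack2 A} (h : pop1 s = some t) :
    ∃ r v x, s = r ++ [v ++ [x]] ∧ v ≠ [] ∧ t = r ++ [v] := by
  rcases List.eq_nil_or_concat s with rfl | ⟨r, w, rfl⟩
  · simp [pop1] at h
  · rcases List.eq_nil_or_concat w with rfl | ⟨v, x, rfl⟩
    · simp [pop1] at h
    · simp [pop1] at h
      refine ⟨r, v, x, by simp, ?_, h.2.symm⟩
      rintro rfl
      simp at h

theorem applyOp_stepN (bot : A) (op : Op A) {s t : Stack2 A} (h : applyOp bot op s = some t) :
    StepN bot s t := by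
  have hpop : ∀ {s t : Stack2 A}, pop1 s = some t → StepN bot s t := by
    intro s t h
    obtain ⟨r, v, x, rfl, -, rfl⟩ := pop1_eq h
    exact StepN.pop r v x
  rcases List.eq_nil_or_concat s with rfl | ⟨r, w, rfl⟩
  · cases op <;>
      simp [applyOp, clone2, pop1, pop2, collapse, push1, push2, top2, top1] at h
  · rw [List.concat_eq_append] at h ⊢
    cases op with
    | clone2 =>
      simp [applyOp, clone2, top2] at h
      subst h
      simpa using StepN.clone (bot := bot) r w
    | pop1 => exact hpop h
    | pop2 =>
      simp [applyOp, pop2] at h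
      obtain ⟨h, rfl⟩ := h
      have := StepN.take (bot := bot) (r ++ [w]) r.length (by simp) (by
        exact h)
      simpa using this
    | collapse =>
      simp only [applyOp, collapse] at h
      split at h
      · split at h
        · cases h
          exact StepN.take _ _ (by simp) (by assumption)
        · cases h
      · exact hpop h
      · cases h
    | push1 a =>
      simp [applyOp, push1, top2] at h
      obtain ⟨-, rfl⟩ := h
      exact StepN.push r w _ (by simp)
    | push2 a =>
      simp [applyOp, push2, top2] at h
      obtain ⟨-, rfl⟩ := h
      exact StepN.push r w _ (by simp)

theorem stepN_ne_nil (bot : A) {s t : Stack2 A} (h : StepN bot s t) : s ≠ [] := by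
  cases h <;> simp_all

theorem stepN_next (bot : A) {s t : Stack2 A} (h : StepN bot s t) :
    Next bot s t ∨ GenMilestone bot s t := by
  cases h with
  | clone r w =>
    left
    have := Next.clone (bot := bot) (r ++ [w]) (by simp)
    simpa [lastW] using this
  | take _ k ht hk => exact Or.inr (gm_take bot s ht k hk)
  | pop r v x =>
    by_cases h : v ++ [x] <+: lastW bot r
    · exact Or.inl (Next.down r v x h)
    · exact Or.inr (next_gm bot (Next.up r v x h))
  | push r v x hx =>
    by_cases h : v ++ [x] <+: lastW bot r
    · exact Or.inr (next_gm bot (Next.down r v x h))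
    · exact Or.inl (Next.up r v x h)

/-- The subtree below `m'` can only be entered via the edge from the parent `m` of `m'`. -/
theorem stepN_enter (bot : A) {m m' t t' : Stack2 A} (hmm : Next bot m m')
    (h : StepN bot t t') (ht' : GenMilestone bot t' m') (ht : ¬ GenMilestone bot t m') :
    t = m ∧ t' = m' := by
  rcases stepN_next bot h with hn | hg
  · rcases Relation.ReflTransGen.cases_tail (gm_nexts bot ht') with rfl | ⟨u, hu, hut⟩
    · exact ⟨next_unique bot hn hmm, rfl⟩
    · obtain rfl := next_unique bot hut hn
      exact absurd (nexts_gm bot (stepN_ne_nil bot h) hu) ht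
  · exact absurd (gm_trans bot hg ht') ht

/-- The letter at position `q` of word number `p`. -/
def letterAt (t : Stack2 A) (p q : ℕ) : Option (Letter A) := t[p]?.bind fun y => y[q]?

theorem stepN_letterAt (bot : A) {t t' : Stack2 A} (h : StepN bot t t') (p q : ℕ)
    (ht : p < t.length) (a : A) (l : ℕ)
    (hl : letterAt t' p q = some (Sum.inr (a, l))) :
    letterAt t p q = some (Sum.inr (a, l)) ∨ l = p := by
  unfold letterAt at *
  cases h with
  | clone r w => 
    left
    rwa [List.getElem?_append_left ht] at hl
  | take _ k _ hk =>
    left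
    rw [List.getElem?_take] at hl
    split at hl
    · exact hl
    · simp at hl
  | pop r v x =>
    left
    simp only [List.length_append, List.length_singleton] at ht
    rcases Nat.lt_or_ge p r.length with h | h
    · rwa [List.getElem?_append_left h] at hl ⊢
    · obtain rfl : p = r.length := by omega
      simp only [List.getElem?_concat_length, Option.bind_some] at hl ⊢
      obtain ⟨hq, -⟩ := List.getElem?_eq_some_iff.1 hl
      rwa [List.getElem?_append_left hq]
  | push r v x hx =>
    simp only [List.length_append, List.length_singleton] at ht
    rcases Nat.lt_or_ge p r.length with h | h
    · left
      rwa [List.getElem?_append_left h] at hl ⊢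
    · obtain rfl : p = r.length := by omega
      simp only [List.getElem?_concat_length, Option.bind_some] at hl ⊢
      rcases Nat.lt_or_ge q v.length with h' | h'
      · left
        rwa [List.getElem?_append_left h'] at hl
      · right
        rw [List.getElem?_append_right h', List.getElem?_singleton] at hl
        split at hl
        · exact hx a l (by simpa using hl)
        · cases hl

/-- Every level-2 link in word number `p` points at most to width `p`. -/
def LinksOK (s : Stack2 A) : Prop :=
  ∀ p q a l, letterAt s p q = some (Sum.inr (a, l)) → l ≤ p

theorem stepN_linksOK (bot : A) {t t' : Stack2 A} (h : StepN bot t t') (ht : LinksOK t) :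
    LinksOK t' := by
  intro p q a l hl
  rcases Nat.lt_or_ge p t.length with hp | hp
  · rcases stepN_letterAt bot h p q hp a l hl with h' | h'
    · exact ht p q a l h'
    · exact h'.le
  · cases h with
    | clone r w =>
      unfold letterAt at hl
      have hp' : p < (r ++ [w] ++ [w]).length := by
        by_contra hc
        rw [List.getElem?_eq_none (by omega)] at hl
        simp at hl
      simp only [List.length_append, List.length_singleton] at hp hp'
      obtain rfl : p = (r ++ [w]).length := by simp; omega
      rw [List.getElem?_concat_length] at hl
      have := ht r.length q a l (by
        unfold letterAt
        rw [List.getElem?_concat_length]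
        exact hl)
      simp
      omega
    | take _ k _ hk =>
      unfold letterAt at hl
      rw [List.getElem?_eq_none (by simp; omega)] at hl
      simp at hl
    | pop r v x =>
      unfold letterAt at hl
      rw [List.getElem?_eq_none (by simpa using hp)] at hl
      simp at hl
    | push r v x hx =>
      unfold letterAt at hl
      rw [List.getElem?_eq_none (by simpa using hp)] at hl
      simp at hl

theorem isStack_linksOK (bot : A) {s : Stack2 A} (h : IsStack bot s) : LinksOK s := by
  induction h with
  | base =>
    intro p q a l hl
    unfold letterAt bottom2 at hl
    rcases p with _ | p
    · rcases q with _ | q <;> simp at hl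
    · simp at hl
  | step op _ h ih => exact stepN_linksOK bot (applyOp_stepN bot op h) ih

theorem iter_pop1 {n : ℕ} {r : Stack2 A} {w : Word A} {t : Stack2 A}
    (h : iter pop1 n (r ++ [w]) = some t) :
    n ≤ w.length ∧ t = r ++ [w.take (w.length - n)] := by
  induction n generalizing w with
  | zero =>
    simp [iter] at h
    simp [h]
  | succ n ih =>
    simp only [iter] at h
    obtain ⟨u, hu, hit⟩ := Option.bind_eq_some_iff.1 h
    obtain ⟨r', v, x, hs, hv, rfl⟩ := pop1_eq hu
    obtain ⟨rfl, hw⟩ := List.append_inj' hs rfl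
    simp only [List.cons.injEq, and_true] at hw
    subst hw
    obtain ⟨h1, h2⟩ := ih hit
    refine ⟨by simp; omega, ?_⟩
    rw [h2, List.take_append_of_le_length (by simp)]
    simp

theorem iter_pop1_le {n k : ℕ} {s t : Stack2 A} (h : iter pop1 n s = some t) (hk : k ≤ n) :
    ∃ t', iter pop1 k s = some t' := by
  induction n generalizing s k with
  | zero =>
    obtain rfl : k = 0 := by omega
    exact ⟨t, h⟩
  | succ n ih =>
    rcases k with _ | k
    · exact ⟨s, rfl⟩
    · simp only [iter] at h ⊢
      obtain ⟨u, hu, hit⟩ := Option.bind_eq_some_iff.1 h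
      obtain ⟨t', ht'⟩ := ih hit (k := k) (by omega)
      exact ⟨t', by rw [hu]; exact ht'⟩

theorem iter_pop1_length {n : ℕ} {s t : Stack2 A} (h : iter pop1 n s = some t) :
    t.length = s.length := by
  rcases List.eq_nil_or_concat s with rfl | ⟨r, w, rfl⟩
  · rcases n with _ | n
    · simp [iter] at h
      simp [h]
    · simp [iter, pop1] at h
  · rw [List.concat_eq_append] at h ⊢
    rw [(iter_pop1 h).2]
    simp

theorem iter_pop2_length {n : ℕ} {s t : Stack2 A} (h : iter pop2 n s = some t) :
    t.length ≤ s.length := by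
  induction n generalizing s with
  | zero =>
    simp [iter] at h
    simp [h]
  | succ n ih =>
    simp only [iter] at h
    obtain ⟨u, hu, hit⟩ := Option.bind_eq_some_iff.1 h
    have := ih hit
    simp only [pop2] at hu
    split at hu
    · cases hu
      simp at this
      omega
    · cases hu

theorem substack_length {s t : Stack2 A} (h : Substack t s) : t.length ≤ s.length := by
  obtain ⟨n, m, h⟩ := h
  obtain ⟨u, hu, hit⟩ := Option.bind_eq_some_iff.1 h
  rw [iter_pop1_length hit]
  exact iter_pop2_length hu

theorem run_stepN {S : CPS Q A Γ} (ρ : Run S) {k : ℕ} (hk : k < ρ.len) :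
    StepN S.bot (ρ.stk k) (ρ.stk (k + 1)) := by
  obtain ⟨σ, -, -, h⟩ := ρ.ok k hk
  exact applyOp_stepN S.bot _ h

theorem run_enter {S : CPS Q A Γ} (ρ : Run S) {m m' : Stack2 A} (hmm : Next S.bot m m')
    (hlast : GenMilestone S.bot (ρ.stk ρ.len) m') (n k : ℕ) (hk : k + n = ρ.len)
    (h : ¬ GenMilestone S.bot (ρ.stk k) m') :
    ∃ j, k ≤ j ∧ j < ρ.len ∧ ρ.stk j = m ∧ ρ.stk (j + 1) = m' := by
  induction n generalizing k with
  | zero =>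
    obtain rfl : k = ρ.len := by omega
    exact absurd hlast h
  | succ n ih =>
    by_cases hn : GenMilestone S.bot (ρ.stk (k + 1)) m'
    · have := stepN_enter S.bot hmm (run_stepN ρ (by omega)) hn h
      exact ⟨k, le_rfl, by omega, this.1, this.2⟩
    · obtain ⟨j, h1, h2, h3⟩ := ih (k + 1) (by omega) hn
      exact ⟨j, by omega, h2, h3⟩

theorem run_letterAt {S : CPS Q A Γ} (ρ : Run S) (p q : ℕ) (a : A) (l : ℕ) (hl : l ≠ p)
    (n k : ℕ) (hk : k + n ≤ ρ.len) (hlen : ∀ j, k ≤ j → j ≤ k + n → p < (ρ.stk j).length)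
    (h : letterAt (ρ.stk (k + n)) p q = some (Sum.inr (a, l))) :
    letterAt (ρ.stk k) p q = some (Sum.inr (a, l)) := by
  induction n with
  | zero => exact h
  | succ n ih =>
    apply ih (by omega) (fun j h1 h2 => hlen j h1 (by omega))
    rcases stepN_letterAt S.bot (run_stepN ρ (k := k + n) (by omega)) p q
      (hlen _ (by omega) (by omega)) a l h with h' | h'
    · exact h'
    · exact absurd h' hl

/-- If a run `ρ` ending in stack `s` visits a generalised milestone
`m ≠ s` of `s` for the last time at position `i`, then `ρ` also visits the
`≪`-minimal generalised milestone `m' ∈ genMilestones(s)∖genMilestones(m)`, and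
`ρ↾[i+1,i']` is a loop of `m'` for `i'` the last occurrence of `m'`. -/
theorem run_visits_next_generalised_milestone
    {Q A Γ : Type} [DecidableEq A] (S : CPS Q A Γ) (ρ : Run S)
    (s m : Stack2 A) (hs : IsStack S.bot s) (hlast : ρ.stk ρ.len = s)
    (hm : GenMilestone S.bot s m) (hms : m ≠ s)
    (i : ℕ) (hi : i ≤ ρ.len) (hstk : ρ.stk i = m)
    (hmax : ∀ j, j ≤ ρ.len → ρ.stk j = m → j ≤ i) :
    ∃ m', (GenMilestone S.bot s m' ∧ ¬ GenMilestone S.bot m m' ∧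
        ∀ m'', GenMilestone S.bot s m'' → ¬ GenMilestone S.bot m m'' →
          ll S.bot m' m'') ∧
      ∃ i', i + 1 ≤ i' ∧ i' ≤ ρ.len ∧ ρ.stk i' = m' ∧
        (∀ j, j ≤ ρ.len → ρ.stk j = m' → j ≤ i') ∧
        LoopSeg ρ (i + 1) i' := by
  have hm0 : Relation.ReflTransGen (Next S.bot) m s := gm_nexts S.bot hm
  have hsne : s ≠ [] := by
    rintro rfl
    exact gm_nil _ _ hm
  have hmne : m ≠ [] := by
    obtain ⟨_, v, -, rfl, -⟩ := hm
    simp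
  obtain ⟨m', hmm, hm's⟩ : ∃ m', Next S.bot m m' ∧ Relation.ReflTransGen (Next S.bot) m' s := by
    rcases Relation.ReflTransGen.cases_head hm0 with h | h
    · exact absurd h hms
    · exact h
  have hgm' : GenMilestone S.bot s m' := nexts_gm S.bot hsne hm's
  have hnot : ¬ GenMilestone S.bot m m' := next_not_gm S.bot hmm
  have hend : GenMilestone S.bot (ρ.stk ρ.len) m' := by rw [hlast]; exact hgm'
  have hall : ∀ k, i + 1 ≤ k → k ≤ ρ.len → GenMilestone S.bot (ρ.stk k) m' := by
    intro k h1 h2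
    by_contra hc
    obtain ⟨j, hj1, hj2, hj3, -⟩ := run_enter ρ hmm hend (ρ.len - k) k (by omega) hc
    have := hmax j hj2.le hj3
    omega
  obtain ⟨hilt, hnext⟩ : i < ρ.len ∧ ρ.stk (i + 1) = m' := by
    obtain ⟨j, hj1, hj2, hj3, hj4⟩ := run_enter ρ hmm hend (ρ.len - i) i (by omega)
      (by rw [hstk]; exact hnot)
    have := hmax j hj2.le hj3
    obtain rfl : j = i := by omega
    exact ⟨hj2, hj4⟩
  refine ⟨m', ⟨hgm', hnot, ?_⟩, ?_⟩
  · intro m'' h1 h2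
    have hU : Relator.RightUnique (Function.swap (Next S.bot)) :=
      fun _ _ _ h h' => next_unique S.bot h h'
    have h3 := Relation.reflTransGen_swap.2 (gm_nexts S.bot h1)
    have h4 := Relation.reflTransGen_swap.2 hm's
    rcases Relation.ReflTransGen.total_of_right_unique hU h3 h4 with h5 | h5
    · exact nexts_ll S.bot (Relation.reflTransGen_swap.1 h5)
    · rcases Relation.ReflTransGen.cases_tail (Relation.reflTransGen_swap.1 h5) with
        rfl | ⟨u, hu, hum⟩
      · exact Relation.ReflTransGen.refl
      · obtain rfl := next_unique S.bot hum hmm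
        exact absurd (nexts_gm S.bot hmne hu) h2
  · classical
    set i' := Nat.findGreatest (fun j => ρ.stk j = m') ρ.len with hi'
    have hge : i + 1 ≤ i' := Nat.le_findGreatest (by omega) hnext
    have hle : i' ≤ ρ.len := Nat.findGreatest_le _
    have hst : ρ.stk i' = m' :=
      Nat.findGreatest_spec (P := fun j => ρ.stk j = m') (m := i + 1) (by omega) hnext
    refine ⟨i', hge, hle, hst, fun j h1 h2 => Nat.le_findGreatest h1 h2, hge, hle, ?_, ?_, ?_⟩
    · rw [hst, hnext]
    · intro k h1 h2 t ht hsub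
      rw [hnext] at ht
      have h3 := gm_length S.bot (hall k h1 (by omega))
      have h4 := substack_length hsub
      simp only [pop2] at ht
      split at ht
      · cases ht
        simp at h4
        omega
      · cases ht
    · intro k h1 h2 n hn t ht hkt n' hn'
      rw [hnext] at ht ⊢
      obtain ⟨t', ht'⟩ := iter_pop1_le ht hn'.le
      refine ⟨t', ht', ?_⟩
      have hgk := hall k h1 (by omega)
      obtain ⟨i0, w, hi0, hm'eq, -, -⟩ := hgm'
      set r := s.take i0 with hr
      have hrl : r.length = i0 := by simp [hr]; omega
      subst hm'eq
      obtain ⟨hnw, rfl⟩ := iter_pop1 ht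
      obtain ⟨-, rfl⟩ := iter_pop1 ht'
      rw [hkt, gm_concat] at hgk
      have hwW : w <+: lastW S.bot r := by
        rcases hgk with hgk | ⟨v, hv, -, hw⟩
        · have := gm_length _ hgk
          simp at this
        · simp only [List.append_cancel_left_eq, List.cons.injEq, and_true] at hv
          subst hv
          rcases hw with hw | hw
          · exact hw
          · have := hw.length_le
            simp at this
            omega
      have hq : w.length - n' - 1 < w.length := by omega
      have htake : w.take (w.length - n') =
          w.take (w.length - n' - 1) ++ [w[w.length - n' - 1]] := by
        conv_lhs => rw [show w.length - n' = w.length - n' - 1 + 1 by omega]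
        rw [List.take_succ_eq_append_getElem hq]
      rw [htake]
      rcases hx : w[w.length - n' - 1] with a | ⟨a, l⟩
      · simp [lvlS, top1, lvlOf]
      · exfalso
        have hwq : w[w.length - n' - 1]? = some (Sum.inr (a, l)) := by
          rw [List.getElem?_eq_getElem hq, hx]
        have hlr : l < r.length := by
          obtain ⟨z, hz⟩ := hwW
          have hWq : (lastW S.bot r)[w.length - n' - 1]? = some (Sum.inr (a, l)) := by
            rw [← hz, List.getElem?_append_left hq, hwq]
          rcases List.eq_nil_or_concat r with h0 | ⟨r', y, h0⟩
          · rw [h0] at hWq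
            simp [lastW, List.getElem?_singleton] at hWq
          · rw [h0] at hWq
            have hy : s[r'.length]? = some y := by
              rw [← List.take_append_drop i0 s, ← hr, h0]
              simp
            have := isStack_linksOK S.bot hs r'.length (w.length - n' - 1) a l (by
              unfold letterAt
              rw [hy]
              simpa [lastW] using hWq)
            rw [h0]
            simp
            omega
        have := run_letterAt ρ r.length (w.length - n' - 1) a l hlr.ne (i' - k) k (by omega)
          (fun j h3 h4 => by
            have := gm_length S.bot (hall j (by omega) (by omega))
            simp only [List.length_append, List.length_singleton] at this
            omega)
          (by
            rw [show k + (i' - k) = i' by omega, hst]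
            unfold letterAt
            rw [List.getElem?_concat_length]
            exact hwq)
        rw [hkt] at this
        unfold letterAt at this
        rw [List.getElem?_concat_length] at this
        simp only [Option.bind_some] at this
        rw [List.getElem?_eq_none (by simp; omega)] at this
        cases this

end CPG
end

section
/- Let s be a level-2 stack and m₁ ∈ Milestones(s). Every run ρ ∈ Runs(m₁,s) whose configurations after the initial one never have a stack that is a substack of m₁ decomposes as ρ = ρ₁∘λ₁∘⋯∘ρ_n∘λ_n, where each λ_i is a loop and each ρ_i has length 1 and connects a generalised milestone of s with its ≪-successor in genMilestones(s). In particular, for t = Pop₂ᵏ(s) and configurations c=(q,t), c'=(q',s), a run ρ ∈ Runs(c,c') witnesses (c,c') ∈ R_→ if and only if it decomposes in this way. -/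
namespace CPG

variable {Q A Γ : Type} [DecidableEq A]

/-- A decomposition `ρ = ρ₁∘λ₁∘⋯∘ρ_n∘λ_n` where each `ρ_i` has length 1 and connects a
generalised milestone of `s` with its `≪`-successor and each `λ_i` is a loop. -/
def LoopDecomp {Q A Γ : Type} [DecidableEq A] {S : CPS Q A Γ} (ρ : Run S)
    (bot : A) (s : Stack2 A) : Prop :=
  ∃ (n : ℕ) (idx : ℕ → ℕ), idx 0 = 0 ∧ idx (2 * n) = ρ.len ∧
    (∀ i, i < 2 * n → idx i ≤ idx (i + 1)) ∧
    ∀ i, i < n → idx (2 * i + 1) = idx (2 * i) + 1 ∧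
      LlSuccessor bot s (ρ.stk (idx (2 * i))) (ρ.stk (idx (2 * i + 1))) ∧
      LoopSeg ρ (idx (2 * i + 1)) (idx (2 * i + 2))

/-! ## Auxiliary material for the proof -/

section Aux

theorem lcp_prefix_left {α : Type} [DecidableEq α] (x y : List α) : lcp x y <+: x := by
  induction x generalizing y with
  | nil => cases y <;> simp [lcp]
  | cons a s ih =>
    cases y with
    | nil => simp [lcp]
    | cons b t =>
      simp only [lcp]
      split
      · exact (List.prefix_cons_inj a).2 (ih t)
      · simp

theorem lcp_prefix_right {α : Type} [DecidableEq α] (x y : List α) : lcp x y <+: y := by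
  induction x generalizing y with
  | nil => cases y <;> simp [lcp]
  | cons a s ih =>
    cases y with
    | nil => simp [lcp]
    | cons b t =>
      simp only [lcp]
      split
      · rename_i h
        subst h
        exact (List.prefix_cons_inj a).2 (ih t)
      · simp

theorem prefix_lcp_s10 {α : Type} [DecidableEq α] (z x y : List α) (hx : z <+: x) (hy : z <+: y) :
    z <+: lcp x y := by
  induction z generalizing x y with
  | nil => simp
  | cons c z ih =>
    obtain ⟨x', rfl⟩ := hx
    obtain ⟨y', rfl⟩ := hy
    simp only [List.cons_append, lcp, if_true]
    exact (List.prefix_cons_inj c).2 (ih _ _ (List.prefix_append _ _) (List.prefix_append _ _))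

theorem prefix_antisymm {α : Type} {x y : List α} (h : x <+: y) (h' : y <+: x) : x = y :=
  h.eq_of_length (le_antisymm h.length_le h'.length_le)

theorem prefix_linear {α : Type} {x y z : List α} (h : x <+: z) (h' : y <+: z) :
    x <+: y ∨ y <+: x := by
  rcases le_total x.length y.length with hl | hl
  · exact Or.inl (List.prefix_of_prefix_length_le h h' hl)
  · exact Or.inr (List.prefix_of_prefix_length_le h' h hl)

/-- Splitting a proper prefix at the next letter. -/
theorem proper_prefix_next {α : Type} {v w : List α} (h : v <+: w) (hne : v ≠ w) :
    ∃ c, v ++ [c] <+: w := by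
  obtain ⟨r, rfl⟩ := h
  cases r with
  | nil => simp at hne
  | cons c r => exact ⟨c, r, by simp⟩

theorem nil_or_snoc {α : Type} (x : List α) : x = [] ∨ ∃ r c, x = r ++ [c] := by
  rcases List.eq_nil_or_concat x with h | ⟨r, c, h⟩
  · exact Or.inl h
  · exact Or.inr ⟨r, c, by simpa using h⟩

/-- One step of a run, as seen from position `i`. -/
def StepRel {A : Type} (i : ℕ) (x y : Stack2 A) : Prop :=
  y.take i = x.take i ∧ (y.getD i [] = x.getD i [] ∨
    (x.length = i + 1 ∧ y.length = i + 1 ∧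
      ((∃ c : Letter A, (∀ a k, c = Sum.inr (a, k) → k = i) ∧
          y.getD i [] = x.getD i [] ++ [c]) ∨
        ∃ c : Letter A, x.getD i [] = y.getD i [] ++ [c])))

/-- The possible effects of an operation. -/
theorem applyOp_cases {A : Type} [DecidableEq A] (bot : A) (op : Op A) (s t : Stack2 A)
    (h : applyOp bot op s = some t) :
    ∃ (r : Stack2 A) (w : Word A), s = r ++ [w] ∧
      (t = r ++ [w, w] ∨
        (∃ c : Letter A, (∀ a k, c = Sum.inr (a, k) → k = r.length) ∧ t = r ++ [w ++ [c]]) ∨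
        (∃ w' c, w' ≠ [] ∧ w = w' ++ [c] ∧ t = r ++ [w']) ∨
        (r ≠ [] ∧ t = r) ∨
        (∃ w' a k, w = w' ++ [Sum.inr (a, k)] ∧ 0 < k ∧ t = s.take k)) := by
  rcases nil_or_snoc s with rfl | ⟨r, w, rfl⟩
  · cases op <;> simp [applyOp, clone2, push1, push2, pop1, pop2, collapse, top1, top2] at h
  have hpop1 : pop1 (r ++ [w]) = some t → ∃ w' c, w' ≠ [] ∧ w = w' ++ [c] ∧ t = r ++ [w'] := by
    intro h
    simp only [pop1, List.getLast?_append, List.getLast?_singleton, Option.some_or] at h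
    split_ifs at h with hl
    rcases nil_or_snoc w with rfl | ⟨w', c, rfl⟩
    · simp at hl
    · refine ⟨w', c, ?_, rfl, ?_⟩
      · rintro rfl
        simp at hl
      · simpa using h.symm
  refine ⟨r, w, rfl, ?_⟩
  cases op with
  | clone2 =>
    left
    simpa [applyOp, clone2, top2] using h.symm
  | pop1 =>
    exact Or.inr (Or.inr (Or.inl (hpop1 h)))
  | pop2 =>
    right; right; right; left
    simp only [applyOp, pop2] at h
    split_ifs at h with hl
    refine ⟨?_, by simpa using h.symm⟩
    rintro rfl
    simp at hl
  | collapse =>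
    simp only [applyOp, collapse] at h
    rcases nil_or_snoc w with rfl | ⟨w', c, rfl⟩
    · simp [top1] at h
    · rcases c with a | ⟨a, k⟩
      · simp only [top1, List.getLast?_append, List.getLast?_singleton, Option.some_or,
          Option.bind_some] at h
        exact Or.inr (Or.inr (Or.inl (hpop1 h)))
      · simp only [top1, List.getLast?_append, List.getLast?_singleton, Option.some_or,
          Option.bind_some] at h
        split_ifs at h with hk
        exact Or.inr (Or.inr (Or.inr (Or.inr ⟨w', a, k, rfl, hk, by simpa using h.symm⟩)))
  | push1 a =>
    simp only [applyOp, push1] at h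
    split_ifs at h with ha
    right; left
    exact ⟨Sum.inl a, by simp, by simpa [top2] using h.symm⟩
  | push2 a =>
    simp only [applyOp, push2] at h
    split_ifs at h with ha
    right; left
    exact ⟨Sum.inr (a, r.length), by simp +contextual, by simpa [top2] using h.symm⟩

theorem getD_of_lt {A : Type} (x y : Stack2 A) (i : ℕ) (h : i < x.length) :
    (x ++ y).getD i [] = x.getD i [] := by
  simp [List.getD, List.getElem?_append_left h]

theorem getD_concat {A : Type} (x : Stack2 A) (w : Word A) : (x ++ [w]).getD x.length [] = w := by
  simp [List.getD]

theorem getD_cons_cons {A : Type} (x : Stack2 A) (w v : Word A) :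
    (x ++ [w, v]).getD x.length [] = w := by
  simp [List.getD]

theorem stepRel_of_applyOp {A : Type} [DecidableEq A] (bot : A) (op : Op A) (s t : Stack2 A)
    (h : applyOp bot op s = some t) (i : ℕ) (hs : i < s.length) (ht : i < t.length) :
    StepRel i s t := by
  obtain ⟨r, w, rfl, h⟩ := applyOp_cases bot op s t h
  have hs' : i ≤ r.length := by simp at hs; omega
  rcases Nat.lt_or_eq_of_le hs' with hr | hr
  · rcases h with rfl | ⟨c, hc, rfl⟩ | ⟨w', c, hw, rfl, rfl⟩ | ⟨hr0, rfl⟩ | ⟨w', a, k, rfl, hk, rfl⟩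
    · exact ⟨by simp [List.take_append_of_le_length hs'], Or.inl (by simp only [getD_of_lt _ _ _ hr])⟩
    · exact ⟨by simp [List.take_append_of_le_length hs'], Or.inl (by simp only [getD_of_lt _ _ _ hr])⟩
    · exact ⟨by simp [List.take_append_of_le_length hs'], Or.inl (by simp only [getD_of_lt _ _ _ hr])⟩
    · exact ⟨by simp [List.take_append_of_le_length hs'], Or.inl (by simp only [getD_of_lt _ _ _ hr])⟩
    · have hik : i < k := by
        rw [List.length_take] at ht; omega
      refine ⟨by rw [List.take_take, min_eq_left hik.le], Or.inl ?_⟩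
      simp [List.getD, hik]
  · subst hr
    rcases h with rfl | ⟨c, hc, rfl⟩ | ⟨w', c, hw, rfl, rfl⟩ | ⟨hr0, rfl⟩ | ⟨w', a, k, rfl, hk, rfl⟩
    · exact ⟨by simp, Or.inl (by rw [getD_concat, getD_cons_cons])⟩
    · refine ⟨by simp, Or.inr ⟨by simp, by simp, Or.inl ⟨c, hc, ?_⟩⟩⟩
      rw [getD_concat, getD_concat]
    · refine ⟨by simp, Or.inr ⟨by simp, by simp, Or.inr ⟨c, ?_⟩⟩⟩
      rw [getD_concat, getD_concat]
    · simp at ht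
    · have hik : r.length < k := by
        rw [List.length_take] at ht; omega
      have : List.take k (r ++ [w' ++ [Sum.inr (a, k)]]) = (r ++ [w' ++ [Sum.inr (a, k)]]) := by
        apply List.take_of_length_le
        simp; omega
      rw [this]
      exact ⟨rfl, Or.inl rfl⟩

/-! ### Discrete intermediate value lemmas -/

theorem take_const {A : Type} (f : ℕ → Stack2 A) (i a b : ℕ) (hab : a ≤ b)
    (h : ∀ t, a ≤ t → t < b → StepRel i (f t) (f (t + 1))) : (f b).take i = (f a).take i := by
  induction b, hab using Nat.le_induction with
  | base => rfl
  | succ b hab ih =>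
    rw [(h b hab (Nat.lt_succ_self b)).1]
    exact ih fun t h1 h2 => h t h1 (by omega)

theorem ivt_up {A : Type} (f : ℕ → Stack2 A) (i a b : ℕ) (hab : a ≤ b)
    (h : ∀ t, a ≤ t → t < b → StepRel i (f t) (f (t + 1))) (p : Word A)
    (ha : ¬ p <+: (f a).getD i []) (hb : p <+: (f b).getD i []) :
    ∃ t, a < t ∧ t ≤ b ∧ (f t).length = i + 1 ∧ (f t).getD i [] = p ∧
      ∃ q c, p = q ++ [c] ∧ ∀ a k, c = Sum.inr (a, k) → k = i := by
  induction b, hab using Nat.le_induction with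
  | base => exact absurd hb ha
  | succ b hab ih =>
    by_cases hp : p <+: (f b).getD i []
    · obtain ⟨t, h1, h2, h3⟩ := ih (fun t h1 h2 => h t h1 (by omega)) hp
      exact ⟨t, h1, by omega, h3⟩
    · refine ⟨b + 1, by omega, le_rfl, ?_⟩
      obtain ⟨_, h1 | ⟨h1, h2, ⟨c, hc, h3⟩ | ⟨c, h3⟩⟩⟩ := h b hab (Nat.lt_succ_self b)
      · rw [h1] at hb; exact absurd hb hp
      · rw [h3, List.prefix_concat_iff] at hb
        rcases hb with hb | hb
        · exact ⟨h2, by rw [h3, hb], _, c, hb, hc⟩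
        · exact absurd hb hp
      · exact absurd (hb.trans ⟨[c], h3.symm⟩) hp

theorem ivt_down {A : Type} (f : ℕ → Stack2 A) (i a b : ℕ) (hab : a ≤ b)
    (h : ∀ t, a ≤ t → t < b → StepRel i (f t) (f (t + 1))) (q : Word A) (c : Letter A)
    (ha : q ++ [c] <+: (f a).getD i []) (hb : ¬ q ++ [c] <+: (f b).getD i []) :
    ∃ t, a < t ∧ t ≤ b ∧ (f t).length = i + 1 ∧ (f t).getD i [] = q := by
  induction b, hab using Nat.le_induction with
  | base => exact absurd ha hb
  | succ b hab ih =>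
    by_cases hp : q ++ [c] <+: (f b).getD i []
    · refine ⟨b + 1, by omega, le_rfl, ?_⟩
      obtain ⟨_, h1 | ⟨h1, h2, ⟨d, hc, h3⟩ | ⟨d, h3⟩⟩⟩ := h b hab (Nat.lt_succ_self b)
      · rw [h1] at hb; exact absurd hp hb
      · exact absurd (hp.trans ⟨[d], h3.symm⟩) hb
      · rw [h3, List.prefix_concat_iff] at hp
        rcases hp with hp | hp
        · exact ⟨h2, (List.append_inj' hp rfl).1.symm⟩
        · exact absurd hp hb
    · obtain ⟨t, h1, h2, h3⟩ := ih (fun t h1 h2 => h t h1 (by omega)) hp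
      exact ⟨t, h1, by omega, h3⟩

theorem ivt_ne {A : Type} (f : ℕ → Stack2 A) (i a b : ℕ) (hab : a ≤ b)
    (h : ∀ t, a ≤ t → t < b → StepRel i (f t) (f (t + 1))) (v : Word A)
    (ha : (f a).getD i [] = v) (hb : (f b).getD i [] ≠ v) :
    ∃ t, a ≤ t ∧ t ≤ b ∧ (f t).length = i + 1 ∧ (f t).getD i [] = v := by
  induction b, hab using Nat.le_induction with
  | base => exact absurd ha hb
  | succ b hab ih =>
    by_cases hp : (f b).getD i [] = v
    · refine ⟨b, hab, by omega, ?_⟩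
      obtain ⟨_, h1 | ⟨h1, h2, h3⟩⟩ := h b hab (Nat.lt_succ_self b)
      · rw [h1] at hb; exact absurd hp hb
      · exact ⟨h1, hp⟩
    · obtain ⟨t, h1, h2, h3⟩ := ih (fun t h1 h2 => h t h1 (by omega)) hp
      exact ⟨t, h1, by omega, h3⟩

theorem eq_take_concat {A : Type} (x : Stack2 A) (i : ℕ) (h : x.length = i + 1) :
    x = x.take i ++ [x.getD i []] := by
  have hi : i < x.length := by omega
  conv_lhs => rw [← List.take_of_length_le (le_of_eq h)]
  rw [List.take_succ_eq_append_getElem hi]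
  simp [List.getD, hi]

/-! ### Iterated pops -/

theorem iter_pop2_eq {A : Type} (n : ℕ) (x y : Stack2 A) (h : iter pop2 n x = some y) :
    y = x.take (x.length - n) ∧ (n < x.length ∨ n = 0) := by
  induction n generalizing x with
  | zero => simp [iter] at h; simp [h]
  | succ n ih =>
    simp only [iter, pop2] at h
    split_ifs at h with hl
    · simp only [Option.bind_some] at h
      obtain ⟨h1, h2⟩ := ih _ h
      rw [List.length_dropLast] at h1 h2
      refine ⟨?_, by omega⟩
      rw [h1, List.dropLast_eq_take, List.take_take]
      congr 1
      omega
    · simp at h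

theorem iter_pop2_take {A : Type} (n : ℕ) (x : Stack2 A) (h : n < x.length) :
    iter pop2 n x = some (x.take (x.length - n)) := by
  induction n generalizing x with
  | zero => simp [iter]
  | succ n ih =>
    have hl : 1 < x.length := by omega
    simp only [iter, pop2, hl, if_true, Option.bind_some]
    rw [ih _ (by rw [List.length_dropLast]; omega)]
    rw [List.length_dropLast, List.dropLast_eq_take, List.take_take]
    congr 2
    omega

theorem iter_pop1_length_s10 {A : Type} (n : ℕ) (x y : Stack2 A) (h : iter pop1 n x = some y) :
    y.length = x.length := by
  induction n generalizing x with
  | zero => simp [iter] at h; simp [h]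
  | succ n ih =>
    simp only [iter] at h
    rcases nil_or_snoc x with rfl | ⟨r, w, rfl⟩
    · simp [pop1] at h
    · simp only [pop1, List.getLast?_append, List.getLast?_singleton,
        Option.some_or] at h
      split_ifs at h with hl
      · simp only [Option.bind_some] at h
        rw [ih _ h]
        simp
      · simp at h

theorem iter_pop1_eq {A : Type} (n : ℕ) (r : Stack2 A) (w : Word A) (y : Stack2 A)
    (h : iter pop1 n (r ++ [w]) = some y) :
    y = r ++ [w.take (w.length - n)] ∧ (n < w.length ∨ n = 0) := by
  induction n generalizing w with
  | zero => simp [iter] at h; simp [h]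
  | succ n ih =>
    simp only [iter, pop1, List.getLast?_append, List.getLast?_singleton,
        Option.some_or] at h
    split_ifs at h with hl
    · simp only [Option.bind_some, List.dropLast_concat] at h
      obtain ⟨h1, h2⟩ := ih _ h
      rw [List.length_dropLast] at h1 h2
      refine ⟨?_, by omega⟩
      rw [h1, List.dropLast_eq_take, List.take_take]
      congr 3
      omega
    · simp at h

theorem iter_pop1_take {A : Type} (n : ℕ) (r : Stack2 A) (w : Word A) (h : n < w.length) :
    iter pop1 n (r ++ [w]) = some (r ++ [w.take (w.length - n)]) := by
  induction n generalizing w with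
  | zero => simp [iter]
  | succ n ih =>
    have hl : 1 < w.length := by omega
    simp only [iter, pop1, List.getLast?_append, List.getLast?_singleton,
        Option.some_or, hl, if_true, Option.bind_some, List.dropLast_concat]
    rw [ih _ (by rw [List.length_dropLast]; omega)]
    rw [List.length_dropLast, List.dropLast_eq_take, List.take_take]
    congr 4
    omega

theorem substack_length_s10 {A : Type} (x y : Stack2 A) (h : Substack x y) : x.length ≤ y.length := by
  obtain ⟨n, m, h⟩ := h
  rw [Option.bind_eq_some_iff] at h
  obtain ⟨z, h1, h2⟩ := h
  rw [iter_pop1_length_s10 _ _ _ h2, (iter_pop2_eq _ _ _ h1).1]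
  simp

theorem substack_refl {A : Type} (x : Stack2 A) : Substack x x := ⟨0, 0, by simp [iter]⟩

theorem substack_take {A : Type} (x : Stack2 A) (j : ℕ) (hj : 0 < j) (hj' : j ≤ x.length) :
    Substack (x.take j) x := by
  refine ⟨0, x.length - j, ?_⟩
  rw [iter_pop2_take _ _ (by omega)]
  simp only [Option.bind_some, iter]
  congr 2
  omega

theorem substack_take_trans {A : Type} (x y : Stack2 A) (j l : ℕ) (hj : 0 < j) (hjl : j ≤ l)
    (hl : l ≤ y.length) (h : Substack x (y.take j)) : Substack x (y.take l) := by
  obtain ⟨n, m, h⟩ := h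
  rw [Option.bind_eq_some_iff] at h
  obtain ⟨z, h1, h2⟩ := h
  obtain ⟨h3, h4⟩ := iter_pop2_eq _ _ _ h1
  rw [List.length_take] at h3 h4
  refine ⟨n, (l - j) + m, ?_⟩
  rw [iter_pop2_take _ _ (by rw [List.length_take]; omega)]
  rw [Option.bind_some, ← h2, h3, List.take_take, List.take_take, List.length_take]
  congr 2
  omega

/-! ### Invariants of stacks -/

theorem isStack_inv {A : Type} [DecidableEq A] (bot : A) (s : Stack2 A) (hs : IsStack bot s) :
    ∀ i, i < s.length → [Sum.inl bot] <+: s.getD i [] ∧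
      ∀ a k, Sum.inr (a, k) ∈ s.getD i [] → k ≤ i := by
  induction hs with
  | base =>
    intro i hi
    simp [bottom2] at hi
    subst hi
    simp [bottom2]
  | @step s t op hs h ih =>
    obtain ⟨r, w, rfl, h⟩ := applyOp_cases bot op s t h
    have ihr : ∀ i, i < r.length → [Sum.inl bot] <+: r.getD i [] ∧
      ∀ a k, Sum.inr (a, k) ∈ r.getD i [] → k ≤ i := by
      intro i hi
      have := ih i (by simp; omega)
      rwa [getD_of_lt _ _ _ hi] at this
    have ihw := ih r.length (by simp)
    rw [getD_concat] at ihw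
    have key : ∀ w' : Word A, ([Sum.inl bot] <+: w' ∧
      ∀ a k, Sum.inr (a, k) ∈ w' → k ≤ r.length) → ∀ i, i < (r ++ [w']).length →
      [Sum.inl bot] <+: (r ++ [w']).getD i [] ∧
      ∀ a k, Sum.inr (a, k) ∈ (r ++ [w']).getD i [] → k ≤ i := by
      intro w' hw' i hi
      rw [List.length_append, List.length_singleton] at hi
      rcases Nat.lt_or_eq_of_le (Nat.lt_succ_iff.1 hi) with hi | rfl
      · rw [getD_of_lt _ _ _ hi]; exact ihr i hi
      · rw [getD_concat]; exact hw'
    rcases h with rfl | ⟨c, hc, rfl⟩ | ⟨w', c, hw, rfl, rfl⟩ | ⟨hr0, rfl⟩ | ⟨w', a, k, rfl, hk, rfl⟩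
    · intro i hi
      have e : r ++ [w, w] = (r ++ [w]) ++ [w] := by simp
      rw [e] at hi ⊢
      rw [List.length_append, List.length_singleton] at hi
      rcases Nat.lt_or_eq_of_le (Nat.lt_succ_iff.1 hi) with hi | rfl
      · rw [getD_of_lt _ _ _ hi]; exact ih i hi
      · rw [getD_concat]
        refine ⟨ihw.1, fun a k h => (ihw.2 a k h).trans (by simp)⟩
    · apply key
      refine ⟨ihw.1.trans (List.prefix_append _ _), fun a k h => ?_⟩
      rw [List.mem_append, List.mem_singleton] at h
      rcases h with h | h
      · exact ihw.2 a k h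
      · exact (hc a k h.symm).le
    · apply key
      refine ⟨?_, fun a k h => ihw.2 a k (List.mem_append_left _ h)⟩
      rcases List.prefix_concat_iff.1 ihw.1 with h | h
      · exfalso
        apply hw
        have := congrArg List.length h
        simp at this
        exact this
      · exact h
    · exact ihr
    · intro i hi
      have hik : i < k ∧ i < (r ++ [w' ++ [Sum.inr (a, k)]]).length := by
        rw [List.length_take] at hi; omega
      have := ih i hik.2
      simpa [List.getD, List.getElem?_take, hik.1] using this

/-! ### The order `≪` -/

/-- An explicit over-approximation of `≪`. -/
def llP {A : Type} (bot : A) (s t : Stack2 A) : Prop :=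
  s = t ∨ s.length < t.length ∨
    (s ≠ [] ∧ s.length = t.length ∧ s.dropLast = t.dropLast ∧
      ((t.getLastD [] <+: s.getLastD [] ∧ s.getLastD [] <+: wordAt bot s (s.length - 1)) ∨
        (¬ t.getLastD [] <+: wordAt bot s (s.length - 1) ∧
          (s.getLastD [] <+: wordAt bot s (s.length - 1) ∨ s.getLastD [] <+: t.getLastD []))))

theorem wordAt_dropLast {A : Type} (bot : A) (s t : Stack2 A) (h : s.length = t.length)
    (h' : s.dropLast = t.dropLast) :
    wordAt bot s (s.length - 1) = wordAt bot t (t.length - 1) := by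
  unfold wordAt
  rw [← h]
  split_ifs with h0
  · rfl
  · have e : ∀ x : Stack2 A, x.length = s.length →
        x.getD (s.length - 1 - 1) [] = x.dropLast.getD (s.length - 1 - 1) [] := by
      intro x hx
      rw [List.dropLast_eq_take]
      simp [List.getD, List.getElem?_take]
      rw [if_pos (by omega)]
    rw [e s rfl, e t h.symm, h']

theorem llP_of_ll {A : Type} [DecidableEq A] (bot : A) (s t : Stack2 A) (h : ll bot s t) :
    llP bot s t := by
  induction h with
  | refl => exact Or.inl rfl
  | @tail t u _ h ih =>
    rcases ih with rfl | ih | ⟨h0, h1, h2, h3⟩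
    · rcases h with h | ⟨h0, h1, h2, h3⟩
      · exact Or.inr (Or.inl h)
      · refine Or.inr (Or.inr ⟨h0, h1, h2, ?_⟩)
        rcases h3 with ⟨h3, h4, h5⟩ | ⟨h3, h4, h5⟩
        · exact Or.inl ⟨h3, h5⟩
        · exact Or.inr ⟨h5, Or.inr h3⟩
    · rcases h with h | ⟨_, h1, _⟩
      · exact Or.inr (Or.inl (by omega))
      · exact Or.inr (Or.inl (by omega))
    · rcases h with h | ⟨k0, k1, k2, k3⟩
      · exact Or.inr (Or.inl (by omega))
      · refine Or.inr (Or.inr ⟨h0, by omega, h2.trans k2, ?_⟩)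
        rw [← wordAt_dropLast bot s t h1 h2] at k3
        rcases k3 with ⟨k3, _, k5⟩ | ⟨k3, _, k5⟩
        · rcases h3 with ⟨h3, h4⟩ | ⟨h3, h4⟩
          · exact Or.inl ⟨k3.trans h3, h4⟩
          · exact absurd k5 h3
        · right
          refine ⟨k5, ?_⟩
          rcases h3 with ⟨h3, h4⟩ | ⟨h3, h4 | h4⟩
          · exact Or.inl h4
          · exact Or.inl h4
          · exact Or.inr (h4.trans k3)


theorem wordAt_take {A : Type} (bot : A) (s : Stack2 A) (i : ℕ) (v : Word A) (hi : i < s.length) :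
    wordAt bot (s.take i ++ [v]) i = wordAt bot s i := by
  unfold wordAt
  split_ifs with h0
  · rfl
  · rw [getD_of_lt _ _ _ (by rw [List.length_take]; omega)]
    have : i - 1 < i := by omega
    simp [List.getD, this]

theorem wordAt_succ {A : Type} (bot : A) (s : Stack2 A) (i : ℕ) :
    wordAt bot s (i + 1) = s.getD i [] := by
  simp [wordAt]

theorem length_take_snoc {A : Type} (s : Stack2 A) (i : ℕ) (v : Word A) (hi : i < s.length) :
    (s.take i ++ [v]).length = i + 1 := by
  rw [List.length_append, List.length_take, List.length_singleton]
  omega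

theorem take_snoc_inj {A : Type} {s : Stack2 A} {i j : ℕ} {v v' : Word A} (hi : i < s.length)
    (hj : j < s.length) (h : s.take i ++ [v] = s.take j ++ [v']) : i = j ∧ v = v' := by
  have h1 := congrArg List.length h
  rw [length_take_snoc _ _ _ hi, length_take_snoc _ _ _ hj] at h1
  have h2 := (List.append_inj' h rfl).2
  simp at h2
  exact ⟨by omega, h2⟩

theorem llP_take {A : Type} (bot : A) (s : Stack2 A) (i j : ℕ) (v v' : Word A) (hi : i < s.length)
    (hj : j < s.length) (h : llP bot (s.take i ++ [v]) (s.take j ++ [v']))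
    (hne : s.take j ++ [v'] ≠ s.take i ++ [v]) :
    i < j ∨ (i = j ∧ v' ≠ v ∧ ((v' <+: v ∧ v <+: wordAt bot s i) ∨
      (¬ v' <+: wordAt bot s i ∧ (v <+: wordAt bot s i ∨ v <+: v')))) := by
  rcases h with h | h | ⟨_, h1, _, h3⟩
  · exact absurd h.symm hne
  · rw [length_take_snoc _ _ _ hi, length_take_snoc _ _ _ hj] at h
    left; omega
  · rw [length_take_snoc _ _ _ hi, length_take_snoc _ _ _ hj] at h1
    have hij : i = j := by omega
    subst hij
    right
    rw [length_take_snoc _ _ _ hi, Nat.add_sub_cancel, wordAt_take _ _ _ _ hi] at h3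
    refine ⟨rfl, ?_, by simpa using h3⟩
    rintro rfl
    exact hne rfl

theorem ll_lt {A : Type} [DecidableEq A] (bot : A) (s : Stack2 A) (i j : ℕ) (v v' : Word A)
    (hij : i < j) (hj : j < s.length) : ll bot (s.take i ++ [v]) (s.take j ++ [v']) := by
  apply Relation.ReflTransGen.single
  left
  rw [length_take_snoc _ _ _ (by omega), length_take_snoc _ _ _ hj]
  omega

theorem ll_down {A : Type} [DecidableEq A] (bot : A) (s : Stack2 A) (i : ℕ) (v v' : Word A)
    (hi : i < s.length) (h : v' <+: v) (h' : v <+: wordAt bot s i) :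
    ll bot (s.take i ++ [v]) (s.take i ++ [v']) := by
  by_cases e : v' = v
  · subst e; exact Relation.ReflTransGen.refl
  apply Relation.ReflTransGen.single
  right
  rw [length_take_snoc _ _ _ hi, length_take_snoc _ _ _ hi, Nat.add_sub_cancel,
    wordAt_take _ _ _ _ hi]
  refine ⟨by simp, rfl, by simp, Or.inl ?_⟩
  simpa using ⟨h, e, h'⟩

theorem ll_up {A : Type} [DecidableEq A] (bot : A) (s : Stack2 A) (i : ℕ) (v v' : Word A)
    (hi : i < s.length) (h : v <+: v') (h' : ¬ v' <+: wordAt bot s i) :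
    ll bot (s.take i ++ [v]) (s.take i ++ [v']) := by
  by_cases e : v = v'
  · subst e; exact Relation.ReflTransGen.refl
  apply Relation.ReflTransGen.single
  right
  rw [length_take_snoc _ _ _ hi, length_take_snoc _ _ _ hi, Nat.add_sub_cancel,
    wordAt_take _ _ _ _ hi]
  refine ⟨by simp, rfl, by simp, Or.inr ?_⟩
  simpa using ⟨h, e, h'⟩

theorem ll_via_lcp {A : Type} [DecidableEq A] (bot : A) (s : Stack2 A) (i : ℕ) (v v' z : Word A)
    (hi : i < s.length) (h : z <+: v) (h' : z <+: v') (hv : v <+: wordAt bot s i)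
    (hv' : ¬ v' <+: wordAt bot s i) :
    ll bot (s.take i ++ [v]) (s.take i ++ [v']) :=
  (ll_down bot s i v z hi h hv).trans (ll_up bot s i z v' hi h' hv')

theorem above_full {A : Type} [DecidableEq A] (bot : A) (s : Stack2 A) (i : ℕ) (hi : i < s.length)
    (m : Stack2 A) (hm : GenMilestone bot s m)
    (h : ll bot (s.take i ++ [wordAt bot s (i + 1)]) m)
    (hne : m ≠ s.take i ++ [wordAt bot s (i + 1)]) :
    ∃ j v, i < j ∧ j < s.length ∧ m = s.take j ++ [v] ∧
      lcp (wordAt bot s j) (wordAt bot s (j + 1)) <+: v ∧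
      (v <+: wordAt bot s j ∨ v <+: wordAt bot s (j + 1)) := by
  obtain ⟨j, v, hj, rfl, h1, h2⟩ := hm
  rcases llP_take bot s i j _ v hi hj (llP_of_ll _ _ _ h) hne with h3 | ⟨rfl, h3, h4⟩
  · exact ⟨j, v, h3, hj, rfl, h1, h2⟩
  · exfalso
    rcases h4 with ⟨h4, h5⟩ | ⟨h4, h5⟩
    · exact h3 (prefix_antisymm h4 ((prefix_lcp_s10 _ _ _ h5 List.prefix_rfl).trans h1))
    · have h2 := h2.resolve_left h4
      apply h3
      refine prefix_antisymm h2 ?_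
      rcases h5 with h5 | h5
      · exact (prefix_lcp_s10 _ _ _ h5 List.prefix_rfl).trans h1
      · exact h5

theorem succ_clone {A : Type} [DecidableEq A] (bot : A) (s : Stack2 A) (i : ℕ)
    (hi : i + 1 < s.length) :
    LlSuccessor bot s (s.take i ++ [wordAt bot s (i + 1)])
      (s.take (i + 1) ++ [wordAt bot s (i + 1)]) := by
  refine ⟨⟨i, _, by omega, rfl, lcp_prefix_right _ _, Or.inr List.prefix_rfl⟩,
    ⟨i + 1, _, hi, rfl, lcp_prefix_left _ _, Or.inl List.prefix_rfl⟩, ?_,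
    ll_lt bot s i (i + 1) _ _ (by omega) hi, ?_⟩
  · intro h
    have := (take_snoc_inj (by omega) hi h).1
    omega
  · intro m hm h hne
    obtain ⟨j, v, hij, hj, rfl, h1, h2⟩ := above_full bot s i (by omega) m hm h hne
    rcases Nat.lt_or_eq_of_le (Nat.succ_le_of_lt hij) with h3 | rfl
    · exact ll_lt _ _ _ _ _ _ h3 hj
    · by_cases h4 : v <+: wordAt bot s (i + 1)
      · exact ll_down _ _ _ _ _ hi h4 List.prefix_rfl
      · exact ll_via_lcp bot s (i + 1) _ v _ hi (lcp_prefix_left _ _) h1 List.prefix_rfl h4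

theorem succ_push {A : Type} [DecidableEq A] (bot : A) (s : Stack2 A) (i : ℕ) (hi : i < s.length)
    (v : Word A) (c : Letter A) (hl : lcp (wordAt bot s i) (wordAt bot s (i + 1)) <+: v)
    (hv : v ++ [c] <+: wordAt bot s (i + 1)) :
    LlSuccessor bot s (s.take i ++ [v]) (s.take i ++ [v ++ [c]]) := by
  have hvw : v <+: wordAt bot s (i + 1) := (List.prefix_append _ _).trans hv
  have hnu : ¬ v ++ [c] <+: wordAt bot s i := by
    intro h
    have := ((prefix_lcp_s10 _ _ _ h hv).trans hl).length_le
    simp at this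
  refine ⟨⟨i, _, hi, rfl, hl, Or.inr hvw⟩,
    ⟨i, _, hi, rfl, hl.trans (List.prefix_append _ _), Or.inr hv⟩, ?_,
    ll_up bot s i _ _ hi (List.prefix_append _ _) hnu, ?_⟩
  · intro h
    have := (take_snoc_inj hi hi h).2
    simp at this
  · rintro m ⟨j, v', hj, rfl, h1, h2⟩ h hne
    rcases llP_take bot s i j v v' hi hj (llP_of_ll _ _ _ h) hne with h3 | ⟨rfl, h3, h4⟩
    · exact ll_lt _ _ _ _ _ _ h3 hj
    · rcases h4 with ⟨h4, h5⟩ | ⟨h4, h5⟩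
      · exact absurd (prefix_antisymm h4 ((prefix_lcp_s10 _ _ _ h5 hvw).trans h1)) h3
      · have h2 := h2.resolve_left h4
        have h6 : v <+: v' := by
          rcases h5 with h5 | h5
          · exact (prefix_lcp_s10 _ _ _ h5 hvw).trans h1
          · exact h5
        refine ll_up _ _ _ _ _ hi ?_ h4
        rcases prefix_linear hv h2 with h7 | h7
        · exact h7
        · rcases List.prefix_concat_iff.1 h7 with h7 | h7
          · rw [h7]
          · exact absurd (prefix_antisymm h7 h6) h3

theorem succ_pop {A : Type} [DecidableEq A] (bot : A) (s : Stack2 A) (i : ℕ) (hi : i < s.length)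
    (v : Word A) (c : Letter A) (hl : lcp (wordAt bot s i) (wordAt bot s (i + 1)) <+: v)
    (hv : v ++ [c] <+: wordAt bot s i) :
    LlSuccessor bot s (s.take i ++ [v ++ [c]]) (s.take i ++ [v]) := by
  have hvu : v <+: wordAt bot s i := (List.prefix_append _ _).trans hv
  refine ⟨⟨i, _, hi, rfl, hl.trans (List.prefix_append _ _), Or.inl hv⟩,
    ⟨i, _, hi, rfl, hl, Or.inl hvu⟩, ?_,
    ll_down bot s i _ _ hi (List.prefix_append _ _) hv, ?_⟩
  · intro h
    have := (take_snoc_inj hi hi h).2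
    simp at this
  · rintro m ⟨j, v', hj, rfl, h1, h2⟩ h hne
    rcases llP_take bot s i j _ v' hi hj (llP_of_ll _ _ _ h) hne with h3 | ⟨rfl, h3, h4⟩
    · exact ll_lt _ _ _ _ _ _ h3 hj
    · rcases h4 with ⟨h4, h5⟩ | ⟨h4, h5⟩
      · rcases List.prefix_concat_iff.1 h4 with h4 | h4
        · exact absurd h4 h3
        · exact ll_down _ _ _ _ _ hi h4 hvu
      · exact ll_via_lcp bot s i _ v' _ hi hl h1 hvu h4

/-! ### The induction along the run -/

/-- The state of the induction: at time `a` the run is at the generalised milestone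
`w₁:⋯:w_i:v`, which is not visited any more, and the width stays above `i`. -/
structure DecSt {Q A Γ : Type} [DecidableEq A] {S : CPS Q A Γ} (ρ : Run S) (s : Stack2 A)
    (a i : ℕ) (v : Word A) : Prop where
  ha : a ≤ ρ.len
  hi : i < s.length
  hstk : ρ.stk a = s.take i ++ [v]
  hlcp : lcp (wordAt S.bot s i) (wordAt S.bot s (i + 1)) <+: v
  hor : v <+: wordAt S.bot s i ∨ v <+: wordAt S.bot s (i + 1)
  hlen : ∀ t, a ≤ t → t ≤ ρ.len → i < (ρ.stk t).length
  hnv : ∀ t, a < t → t ≤ ρ.len → ρ.stk t ≠ s.take i ++ [v]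

theorem run_step {Q A Γ : Type} [DecidableEq A] {S : CPS Q A Γ} (ρ : Run S) (i a b : ℕ)
    (hb : b ≤ ρ.len) (h : ∀ t, a ≤ t → t ≤ b → i < (ρ.stk t).length) :
    ∀ t, a ≤ t → t < b → StepRel i (ρ.stk t) (ρ.stk (t + 1)) := by
  intro t h1 h2
  obtain ⟨σ, _, _, h3⟩ := ρ.ok t (by omega)
  exact stepRel_of_applyOp S.bot _ _ _ h3 i (h t h1 (by omega)) (h (t + 1) (by omega) (by omega))

theorem getD_take_snoc {A : Type} (s : Stack2 A) (i : ℕ) (v : Word A) (hi : i < s.length) :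
    (s.take i ++ [v]).getD i [] = v := by
  have := getD_concat (s.take i) v
  rwa [List.length_take, min_eq_left hi.le] at this

theorem take_take_snoc {A : Type} (s : Stack2 A) (i : ℕ) (v : Word A) (hi : i < s.length) :
    (s.take i ++ [v]).take i = s.take i := by
  rw [List.take_append_of_le_length (by rw [List.length_take]; omega), List.take_take, min_self]

/-- Recover the stack from its `i`-th word when the width is `i + 1`. -/
theorem run_eq {Q A Γ : Type} [DecidableEq A] {S : CPS Q A Γ} (ρ : Run S) (s : Stack2 A)
    (i a b : ℕ) (w v : Word A) (hi : i < s.length) (hab : a ≤ b)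
    (hb : b ≤ ρ.len) (h : ∀ t, a ≤ t → t ≤ b → i < (ρ.stk t).length)
    (ha : ρ.stk a = s.take i ++ [w])
    (hl : (ρ.stk b).length = i + 1) (hv : (ρ.stk b).getD i [] = v) :
    ρ.stk b = s.take i ++ [v] := by
  have h1 := take_const ρ.stk i a b hab (run_step ρ i a b hb h)
  rw [ha, take_take_snoc _ _ _ hi] at h1
  rw [eq_take_concat _ _ hl, h1, hv]

theorem exists_last (p : ℕ → Prop) (a n : ℕ) (han : a ≤ n) (ha : p a) :
    ∃ b, a ≤ b ∧ b ≤ n ∧ p b ∧ ∀ t, b < t → t ≤ n → ¬ p t := by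
  induction n, han using Nat.le_induction with
  | base => exact ⟨a, le_rfl, le_rfl, ha, fun t h1 h2 => by omega⟩
  | succ n han ih =>
    by_cases hp : p (n + 1)
    · exact ⟨n + 1, by omega, le_rfl, hp, fun t h1 h2 => by omega⟩
    · obtain ⟨b, h1, h2, h3, h4⟩ := ih
      refine ⟨b, h1, by omega, h3, fun t h5 h6 => ?_⟩
      rcases Nat.lt_or_eq_of_le h6 with h7 | rfl
      · exact h4 t h5 (by omega)
      · exact hp

/-- After arriving at a generalised milestone, the part up to its last visit is a loop. -/
theorem finish {Q A Γ : Type} [DecidableEq A] {S : CPS Q A Γ} (ρ : Run S) (s : Stack2 A)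
    (b i : ℕ) (v : Word A) (hb : b ≤ ρ.len) (hi : i < s.length)
    (hstk : ρ.stk b = s.take i ++ [v])
    (hlcp : lcp (wordAt S.bot s i) (wordAt S.bot s (i + 1)) <+: v)
    (hor : v <+: wordAt S.bot s i ∨ v <+: wordAt S.bot s (i + 1))
    (hlen : ∀ t, b ≤ t → t ≤ ρ.len → i < (ρ.stk t).length)
    (hc : (∃ q c, v = q ++ [c] ∧ ∀ t, b ≤ t → t ≤ ρ.len → ρ.stk t ≠ s.take i ++ [q]) ∨
      (∀ a k, Sum.inr (a, k) ∈ v → k < i)) :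
    ∃ a', b ≤ a' ∧ LoopSeg ρ b a' ∧ DecSt ρ s a' i v := by
  obtain ⟨a', h1, h2, h3, h4⟩ := exists_last (fun t => ρ.stk t = s.take i ++ [v]) b ρ.len hb hstk
  refine ⟨a', h1, ⟨h1, h2, h3.trans hstk.symm, ?_, ?_⟩,
    ⟨h2, hi, h3, hlcp, hor, fun t h5 h6 => hlen t (by omega) h6, h4⟩⟩
  · intro k hk hk' t ht hsub
    have h5 := substack_length_s10 _ _ hsub
    have h6 := hlen k hk (by omega)
    rw [hstk] at ht
    unfold pop2 at ht
    split_ifs at ht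
    simp only [Option.some.injEq, List.dropLast_concat] at ht
    rw [← ht, List.length_take] at h5
    omega
  · intro k hk hk' m hm t ht hkt m' hm'
    rw [hstk] at ht ⊢
    obtain ⟨h5, h6⟩ := iter_pop1_eq _ _ _ _ ht
    have hmv : m < v.length := by omega
    refine ⟨_, iter_pop1_take _ _ _ (by omega), ?_⟩
    rw [h5] at hkt
    have hX : (ρ.stk k).getD i [] = v.take (v.length - m) := by
      rw [hkt, getD_take_snoc _ _ _ hi]
    have hX' : (ρ.stk a').getD i [] = v := by
      rw [h3, getD_take_snoc _ _ _ hi]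
    have hst := run_step ρ i k a' h2 fun t h7 h8 => hlen t (by omega) (by omega)
    rcases hc with ⟨q, c, rfl, hq⟩ | hc
    · exfalso
      by_cases hm1 : m = 1
      · apply hq k hk (by omega)
        rw [hkt, hm1]
        simp
      · have h7 : ¬ q <+: (ρ.stk k).getD i [] := by
          rw [hX]
          intro h
          have := h.length_le
          simp at this
          simp at hmv
          omega
        have h8 : q <+: (ρ.stk a').getD i [] := by
          rw [hX']; exact List.prefix_append _ _
        obtain ⟨t', g1, g2, g3, g4, _⟩ := ivt_up ρ.stk i k a' hk' hst q h7 h8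
        exact hq t' (by omega) (by omega) (run_eq ρ s i b t' _ q hi (by omega) (by omega)
          (fun t h7 h8 => hlen t (by omega) (by omega)) hstk g3 g4)
    · have h7 : ¬ v.take (v.length - m') <+: (ρ.stk k).getD i [] := by
        rw [hX]
        intro h
        have := h.length_le
        simp at this
        omega
      have h8 : v.take (v.length - m') <+: (ρ.stk a').getD i [] := by
        rw [hX']; exact ⟨_, List.take_append_drop _ _⟩
      obtain ⟨t', g1, g2, g3, g4, q, c, g5, g6⟩ := ivt_up ρ.stk i k a' hk' hst _ h7 h8
      rw [g5]
      rcases c with x | ⟨x, l⟩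
      · simp [lvlS, top1, lvlOf]
      · exfalso
        have g7 := g6 x l rfl
        have g8 : Sum.inr (x, l) ∈ v := by
          apply List.mem_of_mem_take (i := v.length - m')
          rw [g5]
          simp
        have := hc x l g8
        omega

theorem main_step {Q A Γ : Type} [DecidableEq A] {S : CPS Q A Γ} (ρ : Run S) (s : Stack2 A)
    (hinv : ∀ i, i < s.length → ∀ a k, Sum.inr (a, k) ∈ s.getD i [] → k ≤ i)
    (hend : ρ.stk ρ.len = s) (a i : ℕ) (v : Word A) (h : DecSt ρ s a i v) (hal : a < ρ.len) :
    ∃ a' i' v', a + 1 ≤ a' ∧ LlSuccessor S.bot s (ρ.stk a) (ρ.stk (a + 1)) ∧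
      LoopSeg ρ (a + 1) a' ∧ DecSt ρ s a' i' v' := by
  obtain ⟨_, hi, hstk, hlcp, hor, hlen, hnv⟩ := h
  have hw : wordAt S.bot s (i + 1) = s.getD i [] := wordAt_succ _ _ _
  -- links of the letters of `w_i`
  have hu : 0 < i → ∀ x k, Sum.inr (x, k) ∈ wordAt S.bot s i → k < i := by
    intro h0 x k hk
    obtain ⟨j, rfl⟩ : ∃ j, i = j + 1 := ⟨i - 1, by omega⟩
    rw [wordAt_succ] at hk
    have := hinv j (by omega) x k hk
    omega
  have hu0 : i = 0 → ∀ x k, Sum.inr (x, k) ∉ wordAt S.bot s i := by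
    rintro rfl x k
    simp [wordAt]
  have hvl : ∀ x k, Sum.inr (x, k) ∈ v → k ≤ i := by
    intro x k hk
    rcases hor with h | h
    · have hk := h.subset hk
      rcases Nat.eq_zero_or_pos i with h0 | h0
      · exact absurd hk (hu0 h0 x k)
      · exact (hu h0 x k hk).le
    · have hk := h.subset hk
      rw [hw] at hk
      exact hinv i hi x k hk
  have hXe : (ρ.stk ρ.len).getD i [] = wordAt S.bot s (i + 1) := by rw [hend, hw]
  have hst := run_step ρ i (a + 1) ρ.len le_rfl fun t h7 h8 => hlen t (by omega) (by omega)
  have hnv' : ∀ t, a < t → t ≤ ρ.len → (ρ.stk t).length = i + 1 → (ρ.stk t).getD i [] ≠ v := by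
    intro t h1 h2 h3 h4
    exact hnv t h1 h2 (run_eq ρ s i a t _ v hi (by omega) (by omega)
          (fun t h7 h8 => hlen t (by omega) (by omega)) hstk h3 h4)
  have hsl : ∀ w, (s.take i ++ [w]).length = i + 1 := fun w => length_take_snoc _ _ _ hi
  obtain ⟨σ, _, _, hop⟩ := ρ.ok a hal
  obtain ⟨r, w, hrw, hcases⟩ := applyOp_cases _ _ _ _ hop
  change ρ.stk a = _ at hrw
  rw [hstk] at hrw
  obtain ⟨e1, e2⟩ := List.append_inj' hrw rfl
  simp only [List.cons.injEq, and_true] at e2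
  subst e2
  subst e1
  have hnext := hlen (a + 1) (by omega) (by omega)
  change (ρ.stk (a + 1) = _) ∨ (∃ c, _ ∧ ρ.stk (a + 1) = _) ∨ (∃ w' c, _ ∧ _ ∧ ρ.stk (a + 1) = _) ∨
    (_ ∧ ρ.stk (a + 1) = _) ∨ (∃ w' x k, _ ∧ _ ∧ ρ.stk (a + 1) = (ρ.stk a).take k) at hcases
  rcases hcases with hc | ⟨c, -, hc⟩ | ⟨w', c, hw', rfl, hc⟩ | ⟨-, hc⟩ | ⟨w', x, k, rfl, hk, hc⟩
  · have hX : (ρ.stk (a + 1)).getD i [] = v := by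
      rw [hc]
      have := getD_cons_cons (s.take i) v v
      rwa [List.length_take, min_eq_left hi.le] at this
    have hXall : ∀ t, a + 1 ≤ t → t ≤ ρ.len → (ρ.stk t).getD i [] = v := by
      intro t h1 h2
      by_contra h3
      obtain ⟨t', g1, g2, g3, g4⟩ := ivt_ne ρ.stk i (a + 1) t h1
        (fun t' h5 h6 => hst t' h5 (by omega)) v hX h3
      exact hnv' t' (by omega) (by omega) g3 g4
    have hvw : v = wordAt S.bot s (i + 1) := by
      rw [← hXe]; exact (hXall _ (by omega) le_rfl).symm
    have hlen' : ∀ t, a + 1 ≤ t → t ≤ ρ.len → i + 1 < (ρ.stk t).length := by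
      intro t h1 h2
      have h3 := hlen t (by omega) h2
      have h4 : (ρ.stk t).length ≠ i + 1 := fun h4 => hnv' t (by omega) h2 h4 (hXall t h1 h2)
      omega
    have hi' : i + 1 < s.length := by
      have := hlen' ρ.len (by omega) le_rfl
      rwa [hend] at this
    have hc' : ρ.stk (a + 1) = s.take (i + 1) ++ [v] := by
      rw [hc, List.take_succ_eq_append_getElem hi]
      have : s[i] = v := by
        rw [hvw, hw]; simp [List.getD, hi]
      rw [this]; simp
    obtain ⟨a', g1, g2, g3⟩ := finish ρ s (a + 1) (i + 1) v (by omega) hi' hc'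
      (by rw [hvw]; exact lcp_prefix_left _ _) (Or.inl (by rw [hvw])) hlen'
      (Or.inr fun x k hk => Nat.lt_succ_of_le (hvl x k hk))
    refine ⟨a', _, _, g1, ?_, g2, g3⟩
    rw [hstk, hc', hvw]
    exact succ_clone S.bot s i hi'
  · have hX : (ρ.stk (a + 1)).getD i [] = v ++ [c] := by
      rw [hc, getD_take_snoc _ _ _ hi]
    have hvw : v ++ [c] <+: wordAt S.bot s (i + 1) := by
      by_contra h3
      obtain ⟨t', g1, g2, g3, g4⟩ := ivt_down ρ.stk i (a + 1) ρ.len (by omega) hst v c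
        (by rw [hX]) (by rwa [hXe])
      exact hnv' t' (by omega) (by omega) g3 g4
    obtain ⟨a', g1, g2, g3⟩ := finish ρ s (a + 1) i (v ++ [c]) (by omega) hi hc
      (hlcp.trans (List.prefix_append _ _)) (Or.inr hvw)
      (fun t h1 h2 => hlen t (by omega) h2)
      (Or.inl ⟨v, c, rfl, fun t h1 h2 => hnv t (by omega) h2⟩)
    refine ⟨a', _, _, g1, ?_, g2, g3⟩
    rw [hstk, hc]
    exact succ_push S.bot s i hi v c hlcp hvw
  · have hX : (ρ.stk (a + 1)).getD i [] = w' := by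
      rw [hc, getD_take_snoc _ _ _ hi]
    have hnw : ¬ w' ++ [c] <+: wordAt S.bot s (i + 1) := by
      intro h3
      obtain ⟨t', g1, g2, g3, g4, _⟩ := ivt_up ρ.stk i (a + 1) ρ.len (by omega) hst (w' ++ [c])
        (by rw [hX]; intro h4; have := h4.length_le; simp at this) (by rwa [hXe])
      exact hnv' t' (by omega) (by omega) g3 g4
    have hvu := hor.resolve_right hnw
    have hl : lcp (wordAt S.bot s i) (wordAt S.bot s (i + 1)) <+: w' := by
      rcases List.prefix_concat_iff.1 hlcp with h3 | h3
      · exact absurd (h3 ▸ lcp_prefix_right _ _) hnw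
      · exact h3
    have hwu : w' <+: wordAt S.bot s i := (List.prefix_append _ _).trans hvu
    obtain ⟨a', g1, g2, g3⟩ := finish ρ s (a + 1) i w' (by omega) hi hc hl (Or.inl hwu)
      (fun t h1 h2 => hlen t (by omega) h2)
      (Or.inr fun x k hk => by
        have hk := hwu.subset hk
        rcases Nat.eq_zero_or_pos i with h0 | h0
        · exact absurd hk (hu0 h0 x k)
        · exact hu h0 x k hk)
    refine ⟨a', _, _, g1, ?_, g2, g3⟩
    rw [hstk, hc]
    exact succ_pop S.bot s i hi w' c hl hvu
  · exfalso
    rw [hc, List.length_take] at hnext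
    omega
  · exfalso
    have := hvl x k (by simp)
    rw [hc, List.length_take] at hnext
    omega

/-- Decompositions of the part of the run starting at time `a`. -/
def DecFrom {Q A Γ : Type} [DecidableEq A] {S : CPS Q A Γ} (ρ : Run S)
    (bot : A) (s : Stack2 A) (a : ℕ) : Prop :=
  ∃ (n : ℕ) (idx : ℕ → ℕ), idx 0 = a ∧ idx (2 * n) = ρ.len ∧
    (∀ i, i < 2 * n → idx i ≤ idx (i + 1)) ∧
    ∀ i, i < n → idx (2 * i + 1) = idx (2 * i) + 1 ∧
      LlSuccessor bot s (ρ.stk (idx (2 * i))) (ρ.stk (idx (2 * i + 1))) ∧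
      LoopSeg ρ (idx (2 * i + 1)) (idx (2 * i + 2))

theorem decFrom_cons {Q A Γ : Type} [DecidableEq A] {S : CPS Q A Γ} (ρ : Run S)
    (bot : A) (s : Stack2 A) (a a' : ℕ) (hl : a + 1 ≤ a')
    (h1 : LlSuccessor bot s (ρ.stk a) (ρ.stk (a + 1))) (h2 : LoopSeg ρ (a + 1) a')
    (h : DecFrom ρ bot s a') : DecFrom ρ bot s a := by
  obtain ⟨n, idx, g1, g2, g3, g4⟩ := h
  let f : ℕ → ℕ := fun k => match k with
    | 0 => a
    | 1 => a + 1
    | k + 2 => idx k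
  refine ⟨n + 1, f, rfl, g2, ?_, ?_⟩
  · intro i hi
    match i, hi with
    | 0, _ => exact Nat.le_succ a
    | 1, _ =>
      change a + 1 ≤ idx 0
      omega
    | i + 2, hi => exact g3 i (by omega)
  · intro i hi
    match i, hi with
    | 0, _ =>
      refine ⟨rfl, h1, ?_⟩
      change LoopSeg ρ (a + 1) (idx 0)
      rwa [g1]
    | i + 1, hi => exact g4 i (by omega)

theorem decFrom_of_decSt {Q A Γ : Type} [DecidableEq A] {S : CPS Q A Γ} (ρ : Run S) (s : Stack2 A)
    (hinv : ∀ i, i < s.length → ∀ a k, Sum.inr (a, k) ∈ s.getD i [] → k ≤ i)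
    (hend : ρ.stk ρ.len = s) (n : ℕ) : ∀ (a i : ℕ) (v : Word A), ρ.len - a = n →
      DecSt ρ s a i v → DecFrom ρ S.bot s a := by
  induction n using Nat.strong_induction_on with
  | _ n ih =>
    intro a i v hn h
    rcases Nat.lt_or_eq_of_le h.ha with hal | hal
    · obtain ⟨a', i', v', h1, h2, h3, h4⟩ := main_step ρ s hinv hend a i v h hal
      exact decFrom_cons ρ S.bot s a a' h1 h2 h3 (ih (ρ.len - a') (by omega) a' i' v' rfl h4)
    · exact ⟨0, fun _ => a, rfl, hal, by simp, by simp⟩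

theorem decomp_of_milestone {Q A Γ : Type} [DecidableEq A] (S : CPS Q A Γ)
    (s m₁ : Stack2 A) (hs : IsStack S.bot s) (hm : Milestone S.bot s m₁) (ρ : Run S)
    (h0 : ρ.stk 0 = m₁) (hend : ρ.stk ρ.len = s)
    (hsub : ∀ i, 0 < i → i ≤ ρ.len → ¬ Substack (ρ.stk i) m₁) : LoopDecomp ρ S.bot s := by
  obtain ⟨i, v, hi, rfl, h1, h2⟩ := hm
  have hlen : ∀ t, t ≤ ρ.len → i < (ρ.stk t).length ∧ (ρ.stk t).take i = s.take i := by
    intro t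
    induction t with
    | zero =>
      intro _
      rw [h0, length_take_snoc _ _ _ hi, take_take_snoc _ _ _ hi]
      exact ⟨by omega, rfl⟩
    | succ t ih =>
      intro ht
      obtain ⟨ih1, ih2⟩ := ih (by omega)
      obtain ⟨σ, _, _, hop⟩ := ρ.ok t (by omega)
      have key : i < (ρ.stk (t + 1)).length := by
        by_contra hlt
        push Not at hlt
        have hj : ∃ j, 0 < j ∧ j ≤ i ∧ ρ.stk (t + 1) = (ρ.stk t).take j := by
          obtain ⟨r, w, hrw, hcases⟩ := applyOp_cases _ _ _ _ hop
          change ρ.stk t = _ at hrw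
          rw [hrw, List.length_append, List.length_singleton] at ih1
          change (ρ.stk (t + 1) = _) ∨ (∃ c, _ ∧ ρ.stk (t + 1) = _) ∨
            (∃ w' c, _ ∧ _ ∧ ρ.stk (t + 1) = _) ∨
            (_ ∧ ρ.stk (t + 1) = _) ∨
            (∃ w' x k, _ ∧ _ ∧ ρ.stk (t + 1) = (ρ.stk t).take k) at hcases
          rcases hcases with hc | ⟨c, -, hc⟩ | ⟨w', c, hw', rfl, hc⟩ | ⟨hr, hc⟩ |
            ⟨w', x, k, rfl, hk, hc⟩
          · rw [hc] at hlt; simp at hlt; omega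
          · rw [hc] at hlt; simp at hlt; omega
          · rw [hc] at hlt; simp at hlt; omega
          · refine ⟨r.length, List.length_pos_iff.2 hr, by rwa [hc] at hlt, ?_⟩
            rw [hc, hrw]; simp
          · refine ⟨k, hk, ?_, hc⟩
            rw [hc, List.length_take, hrw, List.length_append, List.length_singleton] at hlt
            omega
        obtain ⟨j, hj1, hj2, hj3⟩ := hj
        apply hsub (t + 1) (by omega) ht
        have e : ρ.stk (t + 1) = (s.take i ++ [v]).take j := by
          have e1 : (ρ.stk t).take j = ((ρ.stk t).take i).take j := by
            rw [List.take_take, min_eq_left hj2]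
          have e2 : (s.take i ++ [v]).take j = ((s.take i ++ [v]).take i).take j := by
            rw [List.take_take, min_eq_left hj2]
          rw [hj3, e1, e2, take_take_snoc _ _ _ hi, ih2]
        rw [e]
        exact substack_take _ _ hj1 (by rw [length_take_snoc _ _ _ hi]; omega)
      refine ⟨key, ?_⟩
      exact (stepRel_of_applyOp S.bot _ _ _ hop i ih1 key).1.trans ih2
  refine decFrom_of_decSt ρ s (fun i hi => (isStack_inv S.bot s hs i hi).2) hend _ 0 i v rfl
    ⟨by omega, hi, h0, h1, Or.inr h2, fun t _ ht => (hlen t ht).1, fun t h3 h4 h5 => ?_⟩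
  apply hsub t h3 h4
  rw [h5]
  exact substack_refl _

theorem idx_mono (idx : ℕ → ℕ) (n : ℕ) (h : ∀ i, i < n → idx i ≤ idx (i + 1)) (a b : ℕ)
    (hab : a ≤ b) (hb : b ≤ n) : idx a ≤ idx b := by
  induction b, hab using Nat.le_induction with
  | base => exact le_rfl
  | succ b hab ih => exact (ih (by omega)).trans (h b (by omega))

theorem avoid_of_decomp {Q A Γ : Type} [DecidableEq A] (S : CPS Q A Γ)
    (s : Stack2 A) (i : ℕ) (hi : i < s.length) (ρ : Run S)
    (h0 : ρ.stk 0 = s.take i ++ [wordAt S.bot s (i + 1)])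
    (hd : LoopDecomp ρ S.bot s) :
    ∀ t, 0 < t → t ≤ ρ.len → ¬ Substack (ρ.stk t) (s.take (i + 1)) := by
  obtain ⟨n, idx, g1, g2, g3, g4⟩ := hd
  -- all later generalised milestones are wider
  have hw : ∀ k, k < n → ∃ j v, i < j ∧ j < s.length ∧
      ρ.stk (idx (2 * k + 1)) = s.take j ++ [v] := by
    intro k
    induction k with
    | zero =>
      intro hk
      obtain ⟨_, hs, _⟩ := g4 0 hk
      obtain ⟨_, s2, s3, s4, _⟩ := hs
      rw [Nat.mul_zero, g1, h0] at s3 s4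
      obtain ⟨j, v, h1, h2, h3, _⟩ := above_full S.bot s i hi _ s2 s4 s3.symm
      exact ⟨j, v, h1, h2, h3⟩
    | succ k ih =>
      intro hk
      obtain ⟨j, v, h1, h2, h3⟩ := ih (by omega)
      obtain ⟨_, _, hl⟩ := g4 k (by omega)
      have e := hl.2.2.1
      obtain ⟨_, hs, _⟩ := g4 (k + 1) hk
      obtain ⟨_, s2, s3, s4, _⟩ := hs
      have e' : 2 * (k + 1) = 2 * k + 2 := by ring
      rw [e', e, h3] at s3 s4
      obtain ⟨j', v', hj', hm, _⟩ := s2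
      rw [e'] at hm ⊢
      rw [hm] at s3 s4
      refine ⟨j', v', ?_, hj', hm⟩
      rcases llP_take S.bot s j j' v v' h2 hj' (llP_of_ll _ _ _ s4) s3.symm with h | ⟨h, _⟩
      · omega
      · omega
  intro t ht htl hsub
  -- locate the loop containing `t`
  have hloc : ∃ k, k < n ∧ idx (2 * k + 1) ≤ t ∧ t ≤ idx (2 * k + 2) := by
    have : ∀ l, l ≤ n → t ≤ idx (2 * l) →
        ∃ k, k < n ∧ idx (2 * k + 1) ≤ t ∧ t ≤ idx (2 * k + 2) := by
      intro l
      induction l with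
      | zero =>
        intro _ h
        rw [Nat.mul_zero, g1] at h
        omega
      | succ l ih =>
        intro hl h
        by_cases h' : t ≤ idx (2 * l)
        · exact ih (by omega) h'
        · have := (g4 l (by omega)).1
          exact ⟨l, by omega, by omega, h⟩
    exact this n le_rfl (by rw [g2]; exact htl)
  obtain ⟨k, hk, h1, h2⟩ := hloc
  obtain ⟨j, v, h3, h4, h5⟩ := hw k hk
  obtain ⟨_, _, hl⟩ := g4 k hk
  have h6 := hl.2.2.2.1 t h1 h2 (s.take j)
  rw [h5] at h6
  refine h6 ?_ (substack_take_trans _ s (i + 1) j (by omega) (by omega) (by omega) hsub)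
  unfold pop2
  rw [length_take_snoc _ _ _ h4, if_pos (by omega)]
  simp

end Aux

/-- Runs from a milestone `m₁` of `s` to `s` avoiding substacks of
`m₁` decompose as alternations of one-step transitions between consecutive
generalised milestones and loops; runs witnessing `R_→` are exactly those that
decompose this way. -/
theorem milestone_run_loop_decomposition
    {Q A Γ : Type} [DecidableEq A] (S : CPS Q A Γ)
    (s m₁ : Stack2 A) (hs : IsStack S.bot s) (hm : Milestone S.bot s m₁) :
    (∀ ρ : Run S, ρ.stk 0 = m₁ → ρ.stk ρ.len = s →
      (∀ i, 0 < i → i ≤ ρ.len → ¬ Substack (ρ.stk i) m₁) →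
      LoopDecomp ρ S.bot s) ∧
    (∀ (k : ℕ) (t : Stack2 A) (q q' : Q) (ρ : Run S), iter pop2 k s = some t →
      ρ.cfg 0 = (q, t) → ρ.cfg ρ.len = (q', s) →
      ((∀ i, 0 < i → i ≤ ρ.len → ¬ Substack (ρ.stk i) t) ↔ LoopDecomp ρ S.bot s)) := by
  refine ⟨decomp_of_milestone S s m₁ hs hm, ?_⟩
  intro k t q q' ρ ht h0 hend
  have hpos : 0 < s.length := by
    obtain ⟨i, v, hi, _⟩ := hm
    omega
  obtain ⟨e, hk⟩ := iter_pop2_eq _ _ _ ht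
  obtain ⟨i, hi⟩ : ∃ i, s.length - k = i + 1 := ⟨s.length - k - 1, by omega⟩
  have his : i < s.length := by omega
  rw [hi] at e
  have e' : t = s.take i ++ [wordAt S.bot s (i + 1)] := by
    rw [e, List.take_succ_eq_append_getElem his, wordAt_succ]
    simp [List.getD, his]
  have h0' : ρ.stk 0 = t := by rw [Run.stk, h0]
  have hend' : ρ.stk ρ.len = s := by rw [Run.stk, hend]
  constructor
  · intro h
    exact decomp_of_milestone S s t hs
      ⟨i, _, his, e', lcp_prefix_right _ _, List.prefix_rfl⟩ ρ h0' hend' h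
  · intro h
    have := avoid_of_decomp S s i his ρ (h0'.trans e') h
    rwa [← e] at this

end CPG
end
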